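/- Charged tracking collections converge to a charged delta distribution (flat-space version of the Lorentz-force theorem): let F : ℝ⁴ → Matrix (Fin 4) (Fin 4) ℝ be a smooth field with antisymmetric values, let γ : ℝ → ℝ⁴ be smooth with η(γ'(t), γ'(t)) = 1 and γ'(t) future timelike for all t, and let κ ≥ 0. Let 𝒞 be a collection of pairs (T, J) of smooth fields T : ℝ⁴ → Matrix (Fin 4) (Fin 4) ℝ (symmetric values, satisfying the dominant energy condition at every point) and J : ℝ⁴ → ℝ⁴ such that: Σₐ ∂J a/∂p a (p) = 0 for all p; for all p and a, Σ_b ∂T a b/∂p b (p) = Σ_b (E * F(p)) a b * J(p) b; and the charge-to-mass ratio is bounded by κ, i.e., for every p and every unit timelike t ∈ ℝ⁴, |Σₐ J(p) a * t a| ≤ κ * Σₐ Σ_b T(p) a b * t a * t b. If the collection {T : (T,J) ∈ 𝒞} tracks γ, then there exist a real κ' with |κ'| ≤ κ, reals cₙ > 0, and pairs (Tₙ, Jₙ) ∈ 𝒞 such that: for every smooth compactly supported symmetric-matrix-valued x, cₙ * ∫_{ℝ⁴} ⟨Tₙ(p), x(p)⟩ dp → ∫_ℝ Σᵢⱼ γ'(t)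 i * γ'(t) j * x(γ(t)) i j dt, and for every smooth compactly supported α : ℝ⁴ → ℝ⁴, cₙ * ∫_{ℝ⁴} Σₐ Jₙ(p) a * α(p) a dp → κ' * ∫_ℝ Σₐ γ'(t) a * α(γ(t)) a dt. -/

import Mathlib

open Matrix MeasureTheory Filter Topology

noncomputable section

abbrev Vec4 : Type := Fin 4 → ℝ
abbrev Mat4 : Type := Matrix (Fin 4) (Fin 4) ℝ

/-- The Minkowski inner product on ℝ⁴. -/
def mink (x y : Vec4) : ℝ := x 0 * y 0 - x 1 * y 1 - x 2 * y 2 - x 3 * y 3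

/-- The matrix diag(1,-1,-1,-1). -/
def E : Mat4 := Matrix.diagonal ![1, -1, -1, -1]

def FutureCausal (x : Vec4) : Prop := 0 ≤ mink x x ∧ 0 ≤ x 0
def FutureTimelike (x : Vec4) : Prop := 0 < mink x x ∧ 0 < x 0
def FutureNull (x : Vec4) : Prop := x ≠ 0 ∧ mink x x = 0 ∧ 0 < x 0
def UnitTimelike (x : Vec4) : Prop := FutureTimelike x ∧ mink x x = 1

/-- The dominant energy condition for a matrix. -/
def DEC (T : Mat4) : Prop :=
  ∀ ξ ζ : Vec4, FutureCausal ξ → FutureCausal ζ → 0 ≤ ∑ i, ∑ j, ξ i * T i j * ζ j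

/-- ⟨T, x⟩ = Σᵢⱼ T i j * x i j. -/
def minner (T x : Mat4) : ℝ := ∑ i, ∑ j, T i j * x i j

/-- The cone D of finite sums of symmetrized products of future causal vectors. -/
def coneD : Set Mat4 :=
  { x | ∃ (n : ℕ) (ξ ζ : Fin n → Vec4),
      (∀ k, FutureCausal (ξ k)) ∧ (∀ k, FutureCausal (ζ k)) ∧
      x = ∑ k, (1/2 : ℝ) • (vecMulVec (ξ k) (ζ k) + vecMulVec (ζ k) (ξ k)) }

/-- A symmetric matrix is generic if it lies in the interior of D, taken within
the space of symmetric matrices. -/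
def Generic (x : Mat4) : Prop :=
  ∃ h : xᵀ = x, (⟨x, h⟩ : { A : Mat4 // Aᵀ = A }) ∈
    interior { A : { A : Mat4 // Aᵀ = A } | A.val ∈ coneD }

/-- Partial derivative in the a-th coordinate direction. -/
def pd (a : Fin 4) (f : Vec4 → ℝ) (p : Vec4) : ℝ := fderiv ℝ f p (Pi.single a 1)

def SmoothMatField (T : Vec4 → Mat4) : Prop := ∀ a b, ContDiff ℝ (⊤ : ℕ∞) fun p => T p a b
def SymValued (T : Vec4 → Mat4) : Prop := ∀ p, (T p)ᵀ = T p
def DivFree (T : Vec4 → Mat4) : Prop := ∀ p b, ∑ a, pd a (fun q => T q a b) p = 0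

/-- A collection of fields tracks a curve. -/
def Tracks (C : Set (Vec4 → Mat4)) (γ : ℝ → Vec4) : Prop :=
  ∀ x : Vec4 → Mat4, SmoothMatField x → HasCompactSupport x → SymValued x →
    (∃ O : Set Vec4, IsOpen O ∧ Set.range γ ⊆ O ∧ ∀ p ∈ O, x p ∈ coneD) →
    (∃ t₀ : ℝ, Generic (x (γ t₀))) →
    ∃ T ∈ C, 0 < ∫ p, minner (T p) (x p)

/-- Maxwell stress-energy tensor of a field strength matrix. -/
def maxwellT (F : Mat4) : Mat4 :=
  F * E * F - ((1/4 : ℝ) * (E * F * E * F).trace) • E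

/-- Source-free Maxwell equations. -/
def SolvesMaxwell (F : Vec4 → Mat4) : Prop :=
  (∀ p b, ∑ a, E a a * pd a (fun q => F q a b) p = 0) ∧
  (∀ p a b c, pd a (fun q => F q b c) p + pd b (fun q => F q c a) p
      + pd c (fun q => F q a b) p = 0)

/-- Klein–Gordon stress-energy tensor. -/
def kgT (φ : Vec4 → ℝ) (m : ℝ) (p : Vec4) : Mat4 :=
  Matrix.of fun a b =>
    pd a φ p * pd b φ p
      - (1/2 : ℝ) * E a b * ((∑ c, E c c * (pd c φ p)^2) - m^2 * (φ p)^2)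

/-- Mass-m Klein–Gordon equation. -/
def SolvesKG (φ : Vec4 → ℝ) (m : ℝ) : Prop :=
  ∀ p, pd 0 (pd 0 φ) p - pd 1 (pd 1 φ) p - pd 2 (pd 2 φ) p - pd 3 (pd 3 φ) p
    + m^2 * φ p = 0

/-! ### Curves parametrized by coordinate time, and functions concentrated near them -/

/-- The displacement from the point of the curve `Γ` with the same time coordinate. -/
def offset (Γ : ℝ → Vec4) (i : Fin 4) (p : Vec4) : ℝ := p i - Γ (p 0) i

/-- The squared norm of the displacement from the curve. -/
def sqOffset (Γ : ℝ → Vec4) (p : Vec4) : ℝ := ∑ i, offset Γ i p ^ 2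

/-- The function `φ` of coordinate time, cut off outside a tube around the curve `Γ`. -/
def tubeLift (Γ : ℝ → Vec4) (φ : ℝ → ℝ) (p : Vec4) : ℝ :=
  φ (p 0) * Real.smoothTransition (2 - sqOffset Γ p)

/-- A smooth curve parametrized by coordinate time, of proper time density `1 / W`. -/
structure TimeCurve (Γ : ℝ → Vec4) (W : ℝ → ℝ) : Prop where
  smooth : ContDiff ℝ (⊤ : ℕ∞) Γ
  time : ∀ t, Γ t 0 = t
  smooth_weight : ContDiff ℝ (⊤ : ℕ∞) W
  weight_pos : ∀ t, 0 < W t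
  mink_deriv : ∀ t, W t ^ 2 * mink (deriv Γ t) (deriv Γ t) = 1

namespace TimeCurve

variable {Γ : ℝ → Vec4} {W : ℝ → ℝ}

lemma smooth_deriv (h : TimeCurve Γ W) : ContDiff ℝ (⊤ : ℕ∞) (deriv Γ) :=
  (contDiff_infty_iff_deriv.1 h.smooth).2

lemma hasDerivAt (h : TimeCurve Γ W) (t : ℝ) : HasDerivAt Γ (deriv Γ t) t :=
  (h.smooth.differentiable (by simp) t).hasDerivAt

lemma contDiff_coord (h : TimeCurve Γ W) (i : Fin 4) : ContDiff ℝ (⊤ : ℕ∞) fun t => Γ t i :=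
  contDiff_pi.1 h.smooth i

lemma contDiff_deriv_coord (h : TimeCurve Γ W) (i : Fin 4) :
    ContDiff ℝ (⊤ : ℕ∞) fun t => deriv Γ t i :=
  contDiff_pi.1 h.smooth_deriv i

lemma deriv_zero (h : TimeCurve Γ W) (t : ℝ) : deriv Γ t 0 = 1 := by
  have h1 := hasDerivAt_pi.1 (h.hasDerivAt t) 0
  have h2 : (fun t => Γ t 0) = id := funext h.time
  rw [h2] at h1
  exact h1.unique (hasDerivAt_id t)

lemma offset_self (h : TimeCurve Γ W) (i : Fin 4) (t : ℝ) : offset Γ i (Γ t) = 0 := by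
  simp [offset, h.time]

lemma contDiff_offset (h : TimeCurve Γ W) (i : Fin 4) :
    ContDiff ℝ (⊤ : ℕ∞) (offset Γ i) :=
  (contDiff_apply ℝ ℝ i).sub ((h.contDiff_coord i).comp (contDiff_apply ℝ ℝ 0))

lemma contDiff_sqOffset (h : TimeCurve Γ W) : ContDiff ℝ (⊤ : ℕ∞) (sqOffset Γ) :=
  ContDiff.sum fun i _ => (h.contDiff_offset i).pow 2

lemma sqOffset_self (h : TimeCurve Γ W) (t : ℝ) : sqOffset Γ (Γ t) = 0 := by
  simp [sqOffset, h.offset_self]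

lemma pd_offset (h : TimeCurve Γ W) (i b : Fin 4) (p : Vec4) :
    pd b (offset Γ i) p = (if b = i then 1 else 0) - (if b = 0 then deriv Γ (p 0) i else 0) := by
  have h1 : HasFDerivAt (fun q : Vec4 => q i) (ContinuousLinearMap.proj (R := ℝ) i) p :=
    (ContinuousLinearMap.proj (R := ℝ) (φ := fun _ : Fin 4 => ℝ) i).hasFDerivAt
  have h0 : HasFDerivAt (fun q : Vec4 => q 0) (ContinuousLinearMap.proj (R := ℝ) 0) p :=
    (ContinuousLinearMap.proj (R := ℝ) (φ := fun _ : Fin 4 => ℝ) 0).hasFDerivAt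
  have h2 := (hasDerivAt_pi.1 (h.hasDerivAt (p 0)) i).comp_hasFDerivAt p h0
  have h3 : HasFDerivAt (offset Γ i) _ p := h1.sub h2
  rw [pd, h3.fderiv]
  simp [Pi.single_apply, eq_comm]

lemma isCompact_tube (h : TimeCurve Γ W) {K : Set ℝ} (hK : IsCompact K) :
    IsCompact {p : Vec4 | p 0 ∈ K ∧ sqOffset Γ p ≤ 2} := by
  have hcl : IsClosed {p : Vec4 | p 0 ∈ K ∧ sqOffset Γ p ≤ 2} :=
    (hK.isClosed.preimage (continuous_apply 0)).inter
      (isClosed_le h.contDiff_sqOffset.continuous continuous_const)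
  obtain ⟨M, hM⟩ := (hK.image h.smooth.continuous).isBounded.exists_norm_le
  refine Metric.isCompact_of_isClosed_isBounded hcl
    (isBounded_iff_forall_norm_le.2 ⟨M + 2, fun p hp => ?_⟩)
  have hM' := hM _ ⟨p 0, hp.1, rfl⟩
  have hM0 : 0 ≤ M := (norm_nonneg _).trans hM'
  refine (pi_norm_le_iff_of_nonneg (by linarith)).2 fun i => ?_
  have h1 : offset Γ i p ^ 2 ≤ 2 :=
    (Finset.single_le_sum (f := fun i => offset Γ i p ^ 2) (fun j _ => sq_nonneg _)
      (Finset.mem_univ i)).trans hp.2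
  have h2 : |offset Γ i p| ≤ 2 := abs_le_of_sq_le_sq (by linarith) (by norm_num)
  have h3 : |Γ (p 0) i| ≤ M := (norm_le_pi_norm (Γ (p 0)) i).trans hM'
  rw [Real.norm_eq_abs, show p i = offset Γ i p + Γ (p 0) i by simp [offset]]
  exact (abs_add_le _ _).trans (by linarith)

lemma tubeLift_self (h : TimeCurve Γ W) (φ : ℝ → ℝ) (t : ℝ) : tubeLift Γ φ (Γ t) = φ t := by
  simp [tubeLift, h.sqOffset_self, h.time, Real.smoothTransition.one_of_one_le]

lemma continuous_tubeLift (h : TimeCurve Γ W) {φ : ℝ → ℝ} (hφ : Continuous φ) :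
    Continuous (tubeLift Γ φ) :=
  (hφ.comp (continuous_apply 0)).mul (Real.smoothTransition.continuous.comp
    (continuous_const.sub h.contDiff_sqOffset.continuous))

lemma contDiff_tubeLift (h : TimeCurve Γ W) {φ : ℝ → ℝ} (hφ : ContDiff ℝ (⊤ : ℕ∞) φ) :
    ContDiff ℝ (⊤ : ℕ∞) (tubeLift Γ φ) :=
  (hφ.comp (contDiff_apply ℝ ℝ 0)).mul (Real.smoothTransition.contDiff.comp
    (contDiff_const.sub h.contDiff_sqOffset))

lemma tubeLift_eq_zero {φ : ℝ → ℝ} {K : Set ℝ} (hK : Function.support φ ⊆ K) {p : Vec4}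
    (hp : ¬ (p 0 ∈ K ∧ sqOffset Γ p ≤ 2)) : tubeLift Γ φ p = 0 := by
  by_cases h0 : p 0 ∈ K
  · have : 2 - sqOffset Γ p ≤ 0 := by
      by_contra hc
      exact hp ⟨h0, by linarith⟩
    simp [tubeLift, Real.smoothTransition.zero_of_nonpos this]
  · have : φ (p 0) = 0 := by
      by_contra hc
      exact h0 (hK hc)
    simp [tubeLift, this]

lemma hasCompactSupport_tubeLift (h : TimeCurve Γ W) {φ : ℝ → ℝ} (hφ : HasCompactSupport φ) :
    HasCompactSupport (tubeLift Γ φ) :=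
  HasCompactSupport.intro (h.isCompact_tube hφ) fun _ hp =>
    tubeLift_eq_zero (subset_tsupport φ) hp

lemma tubeLift_eventuallyEq (h : TimeCurve Γ W) (φ : ℝ → ℝ) (t : ℝ) :
    tubeLift Γ φ =ᶠ[𝓝 (Γ t)] fun p => φ (p 0) := by
  have : ∀ᶠ p in 𝓝 (Γ t), sqOffset Γ p < 1 :=
    h.contDiff_sqOffset.continuous.continuousAt.eventually_lt continuousAt_const
      (by simp [h.sqOffset_self])
  filter_upwards [this] with p hp
  simp [tubeLift, Real.smoothTransition.one_of_one_le (show 1 ≤ 2 - sqOffset Γ p by linarith)]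

lemma pd_tubeLift_eventuallyEq (h : TimeCurve Γ W) {φ : ℝ → ℝ} (hφ : Differentiable ℝ φ)
    (b : Fin 4) (t : ℝ) :
    pd b (tubeLift Γ φ) =ᶠ[𝓝 (Γ t)] if b = 0 then tubeLift Γ (deriv φ) else 0 := by
  filter_upwards [(h.tubeLift_eventuallyEq φ t).eventuallyEq_nhds,
    h.tubeLift_eventuallyEq (deriv φ) t] with p hp hp'
  have h0 : HasFDerivAt (fun q : Vec4 => q 0) (ContinuousLinearMap.proj (R := ℝ) 0) p :=
    (ContinuousLinearMap.proj (R := ℝ) (φ := fun _ : Fin 4 => ℝ) 0).hasFDerivAt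
  have h1 := (hφ (p 0)).hasDerivAt.comp_hasFDerivAt p h0
  have h2 : HasFDerivAt (fun q : Vec4 => φ (q 0)) _ p := h1
  rw [pd, hp.fderiv_eq, h2.fderiv]
  split_ifs with hb
  · rw [hp']; simp [hb]
  · simp [Ne.symm hb]

end TimeCurve

lemma tubeLift_mono {Γ : ℝ → Vec4} {φ ψ : ℝ → ℝ} (h : ∀ t, φ t ≤ ψ t) (p : Vec4) :
    tubeLift Γ φ p ≤ tubeLift Γ ψ p :=
  mul_le_mul_of_nonneg_right (h _) (Real.smoothTransition.nonneg _)

lemma tubeLift_nonneg {Γ : ℝ → Vec4} {φ : ℝ → ℝ} (h : ∀ t, 0 ≤ φ t) (p : Vec4) :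
    0 ≤ tubeLift Γ φ p :=
  mul_nonneg (h _) (Real.smoothTransition.nonneg _)

lemma continuous_pd {f : Vec4 → ℝ} (hf : ContDiff ℝ (⊤ : ℕ∞) f) (a : Fin 4) :
    Continuous (pd a f) :=
  (hf.continuous_fderiv (by simp)).clm_apply continuous_const

lemma hasCompactSupport_pd {f : Vec4 → ℝ} (hf : HasCompactSupport f) (a : Fin 4) :
    HasCompactSupport (pd a f) :=
  hf.fderiv_apply (𝕜 := ℝ) _

lemma pd_mul {f g : Vec4 → ℝ} (hf : ContDiff ℝ (⊤ : ℕ∞) f) (hg : ContDiff ℝ (⊤ : ℕ∞) g)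
    (a : Fin 4) (p : Vec4) :
    pd a (fun q => f q * g q) p = pd a f p * g p + f p * pd a g p := by
  have h := ((hf.differentiable (by simp) p).hasFDerivAt).mul
    ((hg.differentiable (by simp) p).hasFDerivAt)
  have h' : HasFDerivAt (fun q => f q * g q) _ p := h
  rw [pd, h'.fderiv]
  simp [pd]
  ring

lemma integrable_mul_of_hasCompactSupport {k f : Vec4 → ℝ} (hk : Continuous k)
    (hf : Continuous f) (hfc : HasCompactSupport f) : Integrable fun p => k p * f p :=
  (hk.mul hf).integrable_of_hasCompactSupport hfc.mul_left

lemma integral_mul_pd {k f : Vec4 → ℝ} (hk : ContDiff ℝ (⊤ : ℕ∞) k)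
    (hf : ContDiff ℝ (⊤ : ℕ∞) f) (hfc : HasCompactSupport f) (a : Fin 4) :
    ∫ p, k p * pd a f p = -∫ p, pd a k p * f p :=
  integral_mul_fderiv_eq_neg_fderiv_mul_of_integrable
    (integrable_mul_of_hasCompactSupport (continuous_pd hk a) hf.continuous hfc)
    (integrable_mul_of_hasCompactSupport hk.continuous (continuous_pd hf a)
      (hasCompactSupport_pd hfc a))
    (integrable_mul_of_hasCompactSupport hk.continuous hf.continuous hfc)
    (fun _ _ => hk.differentiable (by simp) _) (fun _ _ => hf.differentiable (by simp) _)

/-! ### Charged matter -/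

/-- A stress-energy tensor satisfying the dominant energy condition, with a conserved charge-current
density of charge-to-mass ratio at most `κ`, subject to the Lorentz force of the field `F`. -/
structure ChargedMatter (F : Vec4 → Mat4) (κ : ℝ) (T : Vec4 → Mat4) (J : Vec4 → Vec4) : Prop where
  smooth : SmoothMatField T
  symm : SymValued T
  dec : ∀ p, DEC (T p)
  smooth_current : ∀ a : Fin 4, ContDiff ℝ (⊤ : ℕ∞) fun p => J p a
  current : ∀ p, ∑ a, pd a (fun q => J q a) p = 0
  force : ∀ p (a : Fin 4), ∑ b, pd b (fun q => T q a b) p = ∑ b, (E * F p) a b * J p b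
  ratio : ∀ p (t : Vec4), UnitTimelike t →
    |∑ a, J p a * t a| ≤ κ * ∑ a, ∑ b, T p a b * t a * t b

lemma futureCausal_add_single (i : Fin 4) (hi : i ≠ 0) (a : ℝ) (ha : |a| ≤ 1) :
    FutureCausal (Pi.single 0 1 + Pi.single i a) := by
  have h2 : a * a ≤ 1 := by nlinarith [abs_le.1 ha]
  constructor
  · fin_cases i <;> simp_all [mink]
  · simp [hi.symm]

lemma sum_add_single (T : Mat4) {i j : Fin 4} (a b : ℝ) :
    ∑ k, ∑ l, (Pi.single 0 1 + Pi.single i a : Vec4) k * T k l *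
      (Pi.single 0 1 + Pi.single j b : Vec4) l =
      T 0 0 + a * T i 0 + b * T 0 j + a * b * T i j := by
  simp only [Pi.add_apply, add_mul, mul_add, Finset.sum_add_distrib]
  simp [Pi.single_apply]
  ring

lemma DEC.abs_le {T : Mat4} (h : DEC T) (hs : Tᵀ = T) (i j : Fin 4) : |T i j| ≤ T 0 0 := by
  have key : ∀ i j : Fin 4, i ≠ 0 → ∀ a b : ℝ, |a| ≤ 1 → |b| ≤ 1 → (j = 0 → b = 0) →
      0 ≤ T 0 0 + a * T i 0 + b * T 0 j + a * b * T i j := by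
    intro i j hi a b ha hb hj
    rw [← sum_add_single]
    refine h _ _ (futureCausal_add_single i hi a ha) ?_
    by_cases h0 : j = 0
    · rw [hj h0]
      simpa using futureCausal_add_single 1 (by decide) 0 (by simp)
    · exact futureCausal_add_single j h0 b hb
  have h00 : 0 ≤ T 0 0 := by simpa using key 1 0 (by decide) 0 0 (by simp) (by simp) (by simp)
  have hT : ∀ i j, T i j = T j i := fun i j => congrFun (congrFun hs.symm i) j
  have hi0 : ∀ i, |T i 0| ≤ T 0 0 := by
    intro i
    by_cases hi : i = 0
    · rw [hi, abs_of_nonneg h00]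
    · have h1 := key i 0 hi 1 0 (by simp) (by simp) (by simp)
      have h2 := key i 0 hi (-1) 0 (by simp) (by simp) (by simp)
      exact _root_.abs_le.2 ⟨by linarith, by linarith⟩
  by_cases hi : i = 0
  · rw [hi, hT]; exact hi0 j
  by_cases hj : j = 0
  · rw [hj]; exact hi0 i
  have h1 := key i j hi 1 1 (by simp) (by simp) (by simp [hj])
  have h2 := key i j hi (-1) (-1) (by simp) (by simp) (by simp [hj])
  have h3 := key i j hi 1 (-1) (by simp) (by simp) (by simp [hj])
  have h4 := key i j hi (-1) 1 (by simp) (by simp) (by simp [hj])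
  exact _root_.abs_le.2 ⟨by linarith, by linarith⟩

namespace ChargedMatter

variable {F : Vec4 → Mat4} {κ : ℝ} {T : Vec4 → Mat4} {J : Vec4 → Vec4}

lemma abs_le (h : ChargedMatter F κ T J) (p : Vec4) (i j : Fin 4) : |T p i j| ≤ T p 0 0 :=
  (h.dec p).abs_le (h.symm p) i j

lemma energy_nonneg (h : ChargedMatter F κ T J) (p : Vec4) : 0 ≤ T p 0 0 :=
  (abs_nonneg _).trans (h.abs_le p 0 0)

lemma continuous (h : ChargedMatter F κ T J) (i j : Fin 4) : Continuous fun p => T p i j :=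
  (h.smooth i j).continuous

lemma continuous_current (h : ChargedMatter F κ T J) (i : Fin 4) : Continuous fun p => J p i :=
  (h.smooth_current i).continuous

lemma abs_current_le (h : ChargedMatter F κ T J) (hκ : 0 ≤ κ) (p : Vec4) (i : Fin 4) :
    |J p i| ≤ 6 * κ * T p 0 0 := by
  have h00 := h.energy_nonneg p
  have hκT : 0 ≤ κ * T p 0 0 := mul_nonneg hκ h00
  have hbound : ∀ i : Fin 4, i ≠ 0 → ∀ s : ℝ, |s| = 3 / 4 →
      |5 / 4 * J p 0 + s * J p i| ≤ 4 * (κ * T p 0 0) := by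
    intro i hi s hs
    have hs2 : s * s = 9 / 16 := by rw [← abs_mul_abs_self, hs]; norm_num
    have hu : UnitTimelike (Pi.single 0 (5 / 4) + Pi.single i s) := by
      have h1 : mink (Pi.single 0 (5 / 4) + Pi.single i s)
          (Pi.single 0 (5 / 4) + Pi.single i s) = 1 := by
        fin_cases i <;> simp_all [mink] <;> norm_num
      refine ⟨⟨by rw [h1]; norm_num, ?_⟩, h1⟩
      simp [hi.symm]
    have h1 := h.ratio p _ hu
    have e1 : ∑ a, J p a * (Pi.single 0 (5 / 4) + Pi.single i s : Vec4) a =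
        5 / 4 * J p 0 + s * J p i := by
      simp only [Pi.add_apply, mul_add, Finset.sum_add_distrib]
      simp [Pi.single_apply]
      ring
    have e2 : ∑ a, ∑ b, T p a b * (Pi.single 0 (5 / 4) + Pi.single i s : Vec4) a *
        (Pi.single 0 (5 / 4) + Pi.single i s : Vec4) b =
        25 / 16 * T p 0 0 + 5 / 4 * s * T p 0 i + 5 / 4 * s * T p i 0 + s * s * T p i i := by
      simp only [Pi.add_apply, mul_add, add_mul, Finset.sum_add_distrib]
      simp [Pi.single_apply]
      ring
    rw [e1, e2, hs2] at h1
    refine h1.trans ?_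
    rw [mul_left_comm]
    refine mul_le_mul_of_nonneg_left ?_ hκ
    have b1 : s * T p 0 i ≤ 3 / 4 * T p 0 0 := by
      refine (le_abs_self _).trans ?_
      rw [abs_mul, hs]
      exact mul_le_mul_of_nonneg_left (h.abs_le p 0 i) (by norm_num)
    have b2 : s * T p i 0 ≤ 3 / 4 * T p 0 0 := by
      refine (le_abs_self _).trans ?_
      rw [abs_mul, hs]
      exact mul_le_mul_of_nonneg_left (h.abs_le p i 0) (by norm_num)
    have b3 := (le_abs_self _).trans (h.abs_le p i i)
    linarith
  rw [mul_assoc]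
  by_cases hi : i = 0
  · have h1 := _root_.abs_le.1 (hbound 1 (by decide) (3 / 4) (by norm_num))
    have h2 := _root_.abs_le.1 (hbound 1 (by decide) (-(3 / 4)) (by norm_num))
    rw [hi]
    exact _root_.abs_le.2 ⟨by linarith, by linarith⟩
  · have h1 := _root_.abs_le.1 (hbound i hi (3 / 4) (by norm_num))
    have h2 := _root_.abs_le.1 (hbound i hi (-(3 / 4)) (by norm_num))
    exact _root_.abs_le.2 ⟨by linarith, by linarith⟩

lemma smul (h : ChargedMatter F κ T J) {c : ℝ} (hc : 0 ≤ c) :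
    ChargedMatter F κ (fun p => c • T p) (fun p => c • J p) where
  smooth a b := contDiff_const.mul (h.smooth a b)
  symm p := by rw [Matrix.transpose_smul, h.symm p]
  dec p ξ ζ hξ hζ := by
    have := mul_nonneg hc (h.dec p ξ ζ hξ hζ)
    simp only [Finset.mul_sum] at this
    refine this.trans_eq (Finset.sum_congr rfl fun i _ => Finset.sum_congr rfl fun j _ => ?_)
    change _ = _ * (c * _) * _
    ring
  smooth_current a := contDiff_const.mul (h.smooth_current a)
  current p := by
    have h1 : ∀ a, pd a (fun q => (c • J q) a) p = c * pd a (fun q => J q a) p := fun a => by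
      have := (((h.smooth_current a).differentiable (by simp) p).hasFDerivAt.const_smul c).fderiv
      exact congrArg (fun L : Vec4 →L[ℝ] ℝ => L (Pi.single a 1)) this
    simp only [h1, ← Finset.mul_sum, h.current, mul_zero]
  force p a := by
    have h1 : ∀ b, pd b (fun q => (c • T q) a b) p = c * pd b (fun q => T q a b) p := fun b => by
      have := (((h.smooth a b).differentiable (by simp) p).hasFDerivAt.const_smul c).fderiv
      exact congrArg (fun L : Vec4 →L[ℝ] ℝ => L (Pi.single b 1)) this
    simp only [h1, ← Finset.mul_sum, h.force, Pi.smul_apply, smul_eq_mul, mul_left_comm _ c]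
  ratio p t ht := by
    have h1 := mul_le_mul_of_nonneg_left (h.ratio p t ht) hc
    rw [← abs_of_nonneg hc, ← abs_mul, abs_of_nonneg hc, mul_left_comm] at h1
    simpa only [Finset.mul_sum, Pi.smul_apply, Matrix.smul_apply, smul_eq_mul, mul_assoc] using h1

lemma sum_integral_current_mul_pd (h : ChargedMatter F κ T J) {f : Vec4 → ℝ}
    (hf : ContDiff ℝ (⊤ : ℕ∞) f) (hfc : HasCompactSupport f) :
    ∑ a, ∫ p, J p a * pd a f p = 0 := by
  simp only [fun a => integral_mul_pd (h.smooth_current a) hf hfc a, Finset.sum_neg_distrib]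
  rw [← integral_finsetSum _ fun a _ => integrable_mul_of_hasCompactSupport
    (continuous_pd (h.smooth_current a) a) hf.continuous hfc]
  simp [← Finset.sum_mul, h.current]

lemma sum_integral_mul_pd (h : ChargedMatter F κ T J) (hF : ∀ a b, Continuous fun p => F p a b)
    (a : Fin 4) {f : Vec4 → ℝ} (hf : ContDiff ℝ (⊤ : ℕ∞) f) (hfc : HasCompactSupport f) :
    ∑ b, ∫ p, T p a b * pd b f p = -∑ b, ∫ p, J p b * ((E * F p) a b * f p) := by
  have hEF : ∀ b, Continuous fun p => (E * F p) a b := fun b => by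
    simp only [Matrix.mul_apply]
    exact continuous_finsetSum _ fun i _ => continuous_const.mul (hF i b)
  simp only [fun b => integral_mul_pd (h.smooth a b) hf hfc b, Finset.sum_neg_distrib]
  have hint : ∀ b, Integrable fun p => J p b * ((E * F p) a b * f p) := fun b =>
    integrable_mul_of_hasCompactSupport (f := fun p => (E * F p) a b * f p)
      (h.continuous_current b) ((hEF b).mul hf.continuous) hfc.mul_left
  rw [← integral_finsetSum _ fun b _ => integrable_mul_of_hasCompactSupport
    (continuous_pd (h.smooth a b) b) hf.continuous hfc, ← integral_finsetSum _ fun b _ => hint b]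
  simp only [← Finset.sum_mul, h.force]
  congr 2
  ext p
  rw [Finset.sum_mul]
  exact Finset.sum_congr rfl fun b _ => by ring

end ChargedMatter

/-! ### Test functions of coordinate time -/

/-- A smooth bump function of integral one, positive on `[-1, 1]`. -/
structure UnitBump (b : ℝ → ℝ) : Prop where
  smooth : ContDiff ℝ (⊤ : ℕ∞) b
  compact : HasCompactSupport b
  nonneg : ∀ t, 0 ≤ b t
  pos : ∀ t ∈ Set.Icc (-1 : ℝ) 1, 0 < b t
  integral : ∫ t, b t = 1

lemma exists_unitBump : ∃ b, UnitBump b := by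
  let β : ContDiffBump (0 : ℝ) := ⟨1, 2, by norm_num, by norm_num⟩
  refine ⟨β.normed volume, β.contDiff_normed, β.hasCompactSupport_normed,
    fun t => β.nonneg_normed t, fun t ht => ?_, β.integral_normed⟩
  refine lt_of_le_of_ne (β.nonneg_normed t) (Ne.symm ?_)
  rw [← Function.mem_support, β.support_normed_eq, Metric.mem_ball, dist_zero_right]
  exact (abs_le.2 ht).trans_lt (by norm_num [β])

/-- A function of time decreasing at a prescribed rate outside `[-1, 1]`. -/
lemma exists_damped (R C : ℝ) (hR : 0 ≤ R) (hC : 0 ≤ C) : ∃ g : ℝ → ℝ,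
    ContDiff ℝ (⊤ : ℕ∞) g ∧ Function.support g ⊆ Set.Icc (-(R + 1)) (R + 1) ∧
    (∀ t, 1 ≤ |t| → 0 ≤ -deriv g t - C * |g t|) ∧
    (∀ t, 1 ≤ |t| → |t| ≤ R → 0 < -deriv g t - C * |g t|) := by
  set s := Real.smoothTransition with hs
  let a := (C + 2) / 2
  have hsd : Differentiable ℝ s :=
    (Real.smoothTransition.contDiff (n := 1)).differentiable (by simp)
  have hs' : ∀ x, 0 ≤ deriv s x := fun x => Real.smoothTransition.monotone.deriv_nonneg
  have hder : ∀ t, HasDerivAt (fun t => t * Real.exp (-(a * t ^ 2)) * s (R ^ 2 + 1 - t ^ 2))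
      ((1 - 2 * a * t ^ 2) * Real.exp (-(a * t ^ 2)) * s (R ^ 2 + 1 - t ^ 2) -
        2 * t ^ 2 * Real.exp (-(a * t ^ 2)) * deriv s (R ^ 2 + 1 - t ^ 2)) t := by
    intro t
    have h1 : HasDerivAt (fun t : ℝ => -(a * t ^ 2)) (-(a * (2 * t))) t :=
      ((hasDerivAt_pow 2 t).const_mul a).neg.congr_deriv (by simp)
    have h2 : HasDerivAt (fun t : ℝ => R ^ 2 + 1 - t ^ 2) (-(2 * t)) t := by
      simpa using (hasDerivAt_pow 2 t).const_sub (R ^ 2 + 1)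
    have h3 := (hsd (R ^ 2 + 1 - t ^ 2)).hasDerivAt.comp t h2
    refine (((hasDerivAt_id t).mul h1.exp).mul h3).congr_deriv ?_
    simp
    ring
  have hlow : ∀ t, 1 ≤ |t| → Real.exp (-(a * t ^ 2)) * s (R ^ 2 + 1 - t ^ 2) ≤
      -deriv (fun t => t * Real.exp (-(a * t ^ 2)) * s (R ^ 2 + 1 - t ^ 2)) t -
        C * |t * Real.exp (-(a * t ^ 2)) * s (R ^ 2 + 1 - t ^ 2)| := by
    intro t ht
    have hs0 : 0 ≤ s (R ^ 2 + 1 - t ^ 2) := Real.smoothTransition.nonneg _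
    have he := Real.exp_pos (-(a * t ^ 2))
    rw [(hder t).deriv, abs_mul, abs_mul, abs_of_pos he, abs_of_nonneg hs0]
    have h1 : 0 ≤ 2 * t ^ 2 * Real.exp (-(a * t ^ 2)) * deriv s (R ^ 2 + 1 - t ^ 2) :=
      mul_nonneg (by positivity) (hs' _)
    have h2 : 1 ≤ 2 * a * t ^ 2 - 1 - C * |t| := by
      have : t ^ 2 = |t| ^ 2 := (sq_abs t).symm
      simp only [a, this]
      nlinarith [mul_nonneg hC (sub_nonneg.2 ht)]
    have h3 := mul_le_mul_of_nonneg_right h2 (mul_nonneg he.le hs0)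
    linarith
  refine ⟨fun t => t * Real.exp (-(a * t ^ 2)) * s (R ^ 2 + 1 - t ^ 2), ?_, ?_, fun t ht => ?_,
    fun t ht htR => ?_⟩
  · exact (contDiff_id.mul (contDiff_const.mul (contDiff_id.pow 2)).neg.exp).mul
      (Real.smoothTransition.contDiff.comp (contDiff_const.sub (contDiff_id.pow 2)))
  · intro t ht
    by_contra hc
    refine ht ?_
    have h1 : R + 1 < |t| := by
      by_contra h'
      exact hc (abs_le.1 (not_lt.1 h'))
    have h2 : R ^ 2 + 1 - t ^ 2 ≤ 0 := by
      rw [← sq_abs t]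
      nlinarith
    simp [hs, Real.smoothTransition.zero_of_nonpos h2]
  · exact (mul_nonneg (Real.exp_pos _).le (Real.smoothTransition.nonneg _)).trans (hlow t ht)
  · refine lt_of_lt_of_le (mul_pos (Real.exp_pos _) (Real.smoothTransition.pos_of_pos ?_))
      (hlow t ht)
    rw [← sq_abs t]
    nlinarith [abs_nonneg t]

lemma exists_le_mul_of_pos_on {f g : ℝ → ℝ} (hf : Continuous f) (hg : Continuous g) {K : Set ℝ}
    (hK : IsCompact K) (hpos : ∀ t ∈ K, 0 < g t) : ∃ M, 0 ≤ M ∧ ∀ t ∈ K, f t ≤ M * g t := by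
  obtain ⟨M, hM⟩ := hK.exists_bound_of_continuousOn (f := fun t => f t / g t)
    (hf.continuousOn.div hg.continuousOn fun t ht => (hpos t ht).ne')
  refine ⟨|M|, abs_nonneg _, fun t ht => ?_⟩
  rw [← div_le_iff₀ (hpos t ht)]
  exact ((le_abs_self _).trans (hM t ht)).trans (le_abs_self _)

/-- A test function differs from a multiple of a unit bump by the derivative of a test function. -/
lemma exists_primitive {φ : ℝ → ℝ} (hφ : ContDiff ℝ (⊤ : ℕ∞) φ) (hc : HasCompactSupport φ)
    (h0 : ∫ t, φ t = 0) :
    ∃ Φ : ℝ → ℝ, ContDiff ℝ (⊤ : ℕ∞) Φ ∧ HasCompactSupport Φ ∧ deriv Φ = φ := by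
  obtain ⟨R, hR⟩ := hc.isBounded.exists_norm_le
  have hz : ∀ t, R < |t| → φ t = 0 := fun t ht => by
    by_contra hne
    exact absurd (hR t (subset_tsupport φ hne)) (not_le.2 ht)
  have hd : ∀ t, HasDerivAt (fun t => ∫ x in (-|R| - 1)..t, φ x) (φ t) t := fun t =>
    hφ.continuous.integral_hasStrictDerivAt _ t |>.hasDerivAt
  have hderiv : deriv (fun t => ∫ x in (-|R| - 1)..t, φ x) = φ := funext fun t => (hd t).deriv
  refine ⟨fun t => ∫ x in (-|R| - 1)..t, φ x, ?_, ?_, hderiv⟩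
  · exact contDiff_infty_iff_deriv.2 ⟨fun t => (hd t).differentiableAt, by rwa [hderiv]⟩
  · refine HasCompactSupport.intro (isCompact_Icc (a := -|R| - 1) (b := |R| + 1)) fun t ht => ?_
    rw [Set.mem_Icc, not_and_or, not_le, not_le] at ht
    have hRR := le_abs_self R
    rcases ht with ht | ht
    · refine intervalIntegral.integral_zero_ae (Eventually.of_forall fun x hx => hz x ?_)
      rw [Set.uIoc_of_ge ht.le] at hx
      have := neg_le_abs x
      linarith [hx.2]
    · change ∫ x in (-|R| - 1)..t, φ x = 0
      rw [← h0]
      refine intervalIntegral.integral_eq_integral_of_support_subset fun x hx => ?_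
      have hx' : |x| ≤ R := hR x (subset_tsupport φ hx)
      have := abs_le.1 hx'
      constructor <;> linarith

/-! ### Sequences of charged matter concentrating on a curve -/

/-- A normalized sequence of charged matter that disappears away from the curve `Γ`. -/
structure Concentrating (Γ : ℝ → Vec4) (W b : ℝ → ℝ) (F : Vec4 → Mat4) (κ : ℝ)
    (T : ℕ → Vec4 → Mat4) (J : ℕ → Vec4 → Vec4) : Prop where
  matter : ∀ n, ChargedMatter F κ (T n) (J n)
  norm : ∀ n, ∫ p, T n p 0 0 * tubeLift Γ (fun t => b t / W t) p = 1
  away : ∀ f : Vec4 → ℝ, Continuous f → HasCompactSupport f → (∀ t, f =ᶠ[𝓝 (Γ t)] 0) →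
    Tendsto (fun n => ∫ p, T n p 0 0 * f p) atTop (𝓝 0)

/-- The standing assumptions on the curve, the bump function, the field and the charge bound. -/
structure Background (Γ : ℝ → Vec4) (W b : ℝ → ℝ) (F : Vec4 → Mat4) (κ : ℝ) : Prop where
  curve : TimeCurve Γ W
  bump : UnitBump b
  field : ∀ i j, ContDiff ℝ (⊤ : ℕ∞) fun p => F p i j
  antisymm : ∀ p, (F p)ᵀ = -F p
  nonneg : 0 ≤ κ

namespace Concentrating

variable {Γ : ℝ → Vec4} {W b : ℝ → ℝ} {F : Vec4 → Mat4} {κ : ℝ} {T : ℕ → Vec4 → Mat4}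
  {J : ℕ → Vec4 → Vec4}

lemma integral_energy_mono (h : Concentrating Γ W b F κ T J) {f g : Vec4 → ℝ}
    (hf : Continuous f) (hfc : HasCompactSupport f) (hg : Continuous g)
    (hgc : HasCompactSupport g) (hfg : ∀ p, f p ≤ g p) (n : ℕ) :
    ∫ p, T n p 0 0 * f p ≤ ∫ p, T n p 0 0 * g p :=
  integral_mono
    (integrable_mul_of_hasCompactSupport ((h.matter n).continuous 0 0) hf hfc)
    (integrable_mul_of_hasCompactSupport ((h.matter n).continuous 0 0) hg hgc)
    fun p => mul_le_mul_of_nonneg_left (hfg p) ((h.matter n).energy_nonneg p)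

lemma abs_integral_le (h : Concentrating Γ W b F κ T J) {k f : Vec4 → ℝ} {B : ℝ} {n : ℕ}
    (hkB : ∀ p, |k p| ≤ B * T n p 0 0) (hf : Continuous f) (hfc : HasCompactSupport f) :
    |∫ p, k p * f p| ≤ B * ∫ p, T n p 0 0 * |f p| := by
  rw [← integral_const_mul, ← Real.norm_eq_abs]
  refine norm_integral_le_of_norm_le ((integrable_mul_of_hasCompactSupport
    ((h.matter n).continuous 0 0) hf.abs (hfc.comp_left abs_zero)).const_mul B)
    (Eventually.of_forall fun p => ?_)
  rw [Real.norm_eq_abs, abs_mul, ← mul_assoc]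
  exact mul_le_mul_of_nonneg_right (hkB p) (abs_nonneg _)

/-- The energy in a bounded piece of the tube is bounded. -/
lemma exists_energy_bound (h : Concentrating Γ W b F κ T J) (H : Background Γ W b F κ)
    {θ : ℝ → ℝ} (hθ : Continuous θ) (hθc : HasCompactSupport θ) :
    ∃ M, ∀ᶠ n in atTop, ∫ p, T n p 0 0 * tubeLift Γ θ p ≤ M := by
  have hΓ := H.curve
  obtain ⟨R, hRpos, hR⟩ := hθc.isBounded.exists_pos_norm_le
  have hEF : ∀ j, Continuous fun p => (E * F p) 0 j := fun j => by
    simp only [Matrix.mul_apply]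
    exact continuous_finsetSum _ fun i _ => continuous_const.mul (H.field i j).continuous
  obtain ⟨C₀, hC₀⟩ := (hΓ.isCompact_tube (isCompact_Icc (a := -(R + 1)) (b := R + 1))
    ).exists_bound_of_continuousOn (f := fun p => ∑ j, |(E * F p) 0 j|)
    (continuous_finsetSum _ fun j _ => (hEF j).abs).continuousOn
  set C := 6 * κ * |C₀| with hC
  have hκ6 : 0 ≤ 6 * κ := mul_nonneg (by norm_num) H.nonneg
  have hCnn : 0 ≤ C := mul_nonneg hκ6 (abs_nonneg _)
  obtain ⟨g, hg, hgs, hg0, hgpos⟩ := exists_damped R C hRpos.le hCnn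
  have hgc : HasCompactSupport g := HasCompactSupport.of_support_subset_isCompact isCompact_Icc hgs
  have hgd : ContDiff ℝ (⊤ : ℕ∞) (deriv g) := (contDiff_infty_iff_deriv.1 hg).2
  set G : ℝ → ℝ := fun t => -deriv g t - C * |g t| with hG
  have hGcont : Continuous G :=
    hgd.continuous.neg.sub (continuous_const.mul hg.continuous.abs)
  have hGc : HasCompactSupport G :=
    (hgc.deriv.neg).sub ((hgc.comp_left abs_zero).mul_left (f := fun _ => C))
  set D : Fin 4 → Vec4 → ℝ :=
    fun j => if j = 0 then tubeLift Γ (deriv g) else 0 with hD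
  have hDcont : ∀ j, Continuous (D j) := fun j => by
    simp only [hD]
    split_ifs
    exacts [hΓ.continuous_tubeLift hgd.continuous, continuous_const]
  have hDc : ∀ j, HasCompactSupport (D j) := fun j => by
    simp only [hD]
    split_ifs
    exacts [hΓ.hasCompactSupport_tubeLift hgc.deriv, HasCompactSupport.zero]
  have hf := hΓ.contDiff_tubeLift hg
  have hfc := hΓ.hasCompactSupport_tubeLift hgc
  have he : ∀ j, Continuous fun p => pd j (tubeLift Γ g) p - D j p := fun j =>
    (continuous_pd hf j).sub (hDcont j)
  have hec : ∀ j, HasCompactSupport fun p => pd j (tubeLift Γ g) p - D j p := fun j =>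
    (hasCompactSupport_pd hfc j).sub (hDc j)
  have hlim : Tendsto (fun n => ∑ j, ∫ p, T n p 0 0 * |pd j (tubeLift Γ g) p - D j p|) atTop
      (𝓝 (0 : ℝ)) := by
    have hsum : ∑ _j : Fin 4, (0 : ℝ) = 0 := Finset.sum_const_zero
    refine hsum ▸ tendsto_finsetSum _ fun j _ => h.away _ (he j).abs ((hec j).comp_left abs_zero)
      fun t => ?_
    filter_upwards [hΓ.pd_tubeLift_eventuallyEq (hg.differentiable (by simp)) j t] with p hp
    simp [hp, hD]
  have hmain : ∀ n, ∫ p, T n p 0 0 * tubeLift Γ G p ≤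
      ∑ j, ∫ p, T n p 0 0 * |pd j (tubeLift Γ g) p - D j p| := by
    intro n
    have hm := h.matter n
    have h1 := hm.sum_integral_mul_pd (fun i j => (H.field i j).continuous) 0 hf hfc
    have h2 : ∀ j, ∫ p, T n p 0 j * pd j (tubeLift Γ g) p =
        (∫ p, T n p 0 j * D j p) +
          ∫ p, T n p 0 j * (pd j (tubeLift Γ g) p - D j p) := fun j => by
      rw [← integral_add (integrable_mul_of_hasCompactSupport (hm.continuous 0 j) (hDcont j) (hDc j))
        (integrable_mul_of_hasCompactSupport (hm.continuous 0 j) (he j) (hec j))]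
      congr 1
      ext p
      ring
    have h3 : ∑ j, ∫ p, T n p 0 j * D j p = ∫ p, T n p 0 0 * tubeLift Γ (deriv g) p := by
      rw [Finset.sum_eq_single 0 (fun j _ hj => by simp [hD, hj]) (by simp)]
      simp [hD]
    have h4 : ∀ j, |∫ p, T n p 0 j * (pd j (tubeLift Γ g) p - D j p)| ≤
        ∫ p, T n p 0 0 * |pd j (tubeLift Γ g) p - D j p| := fun j => by
      have := h.abs_integral_le (B := 1) (n := n) (k := fun p => T n p 0 j)
        (fun p => by simpa using hm.abs_le p 0 j) (he j) (hec j)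
      rwa [one_mul] at this
    have h5 : ∑ j, ∫ p, J n p j * ((E * F p) 0 j * tubeLift Γ g p) ≤
        ∫ p, T n p 0 0 * (C * |tubeLift Γ g p|) := by
      have hi : ∀ j, Integrable fun p => J n p j * ((E * F p) 0 j * tubeLift Γ g p) := fun j =>
        integrable_mul_of_hasCompactSupport (f := fun p => (E * F p) 0 j * tubeLift Γ g p)
          (hm.continuous_current j) ((hEF j).mul hf.continuous) hfc.mul_left
      rw [← integral_finsetSum _ fun j _ => hi j]
      refine integral_mono (integrable_finsetSum _ fun j _ => hi j)
        (integrable_mul_of_hasCompactSupport (hm.continuous 0 0)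
          (continuous_const.mul hf.continuous.abs) ((hfc.comp_left abs_zero).mul_left)) fun p => ?_
      by_cases hp : p 0 ∈ Set.Icc (-(R + 1)) (R + 1) ∧ sqOffset Γ p ≤ 2
      · have hb := (le_abs_self _).trans ((hC₀ p hp).trans (le_abs_self _))
        calc ∑ j, J n p j * ((E * F p) 0 j * tubeLift Γ g p)
            ≤ ∑ j, (6 * κ * T n p 0 0) * (|(E * F p) 0 j| * |tubeLift Γ g p|) := by
              refine Finset.sum_le_sum fun j _ => (le_abs_self _).trans ?_
              rw [abs_mul, abs_mul]
              exact mul_le_mul_of_nonneg_right (hm.abs_current_le H.nonneg p j) (by positivity)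
          _ = (6 * κ * T n p 0 0 * |tubeLift Γ g p|) * ∑ j, |(E * F p) 0 j| := by
              rw [Finset.mul_sum]
              exact Finset.sum_congr rfl fun j _ => by ring
          _ ≤ (6 * κ * T n p 0 0 * |tubeLift Γ g p|) * |C₀| :=
              mul_le_mul_of_nonneg_left hb
                (mul_nonneg (mul_nonneg hκ6 (hm.energy_nonneg p)) (abs_nonneg _))
          _ = T n p 0 0 * (C * |tubeLift Γ g p|) := by rw [hC]; ring
      · simp [TimeCurve.tubeLift_eq_zero hgs hp]
    have h6 : ∫ p, T n p 0 0 * tubeLift Γ G p =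
        -(∫ p, T n p 0 0 * tubeLift Γ (deriv g) p) -
          ∫ p, T n p 0 0 * (C * |tubeLift Γ g p|) := by
      have i1 : Integrable fun p => -(T n p 0 0 * tubeLift Γ (deriv g) p) :=
        (integrable_mul_of_hasCompactSupport (hm.continuous 0 0)
          (hΓ.continuous_tubeLift hgd.continuous) (hΓ.hasCompactSupport_tubeLift hgc.deriv)).neg
      have i2 : Integrable fun p => T n p 0 0 * (C * |tubeLift Γ g p|) :=
        integrable_mul_of_hasCompactSupport (hm.continuous 0 0)
          (continuous_const.mul hf.continuous.abs) ((hfc.comp_left abs_zero).mul_left)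
      rw [← integral_neg, ← integral_sub i1 i2]
      congr 1
      ext p
      simp only [tubeLift, hG, abs_mul, abs_of_nonneg (Real.smoothTransition.nonneg _)]
      ring
    simp only [h2, Finset.sum_add_distrib, h3] at h1
    have h7 := Finset.sum_le_sum fun j (_ : j ∈ Finset.univ) => (le_abs_self _).trans (h4 j)
    linarith
  have hWc : Continuous fun t => b t / W t :=
    H.bump.smooth.continuous.div hΓ.smooth_weight.continuous fun t => (hΓ.weight_pos t).ne'
  have hbW : HasCompactSupport fun t => b t / W t :=
    H.bump.compact.mono fun t ht hbt => ht (by simp [hbt])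
  have hbWnn : ∀ t, 0 ≤ b t / W t := fun t => div_nonneg (H.bump.nonneg t) (hΓ.weight_pos t).le
  have hK : IsCompact {t : ℝ | 1 ≤ |t| ∧ |t| ≤ R} := by
    refine Metric.isCompact_of_isClosed_isBounded
      ((isClosed_le continuous_const continuous_abs).inter
        (isClosed_le continuous_abs continuous_const))
      (isBounded_iff_forall_norm_le.2 ⟨R, fun t ht => ht.2⟩)
  obtain ⟨M₁, hM₁, hM₁'⟩ := exists_le_mul_of_pos_on hθ hGcont hK fun t ht => hgpos t ht.1 ht.2
  obtain ⟨M₂, hM₂, hM₂'⟩ := exists_le_mul_of_pos_on (f := fun t => θ t - M₁ * G t)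
    (hθ.sub (continuous_const.mul hGcont)) hWc (isCompact_Icc (a := -1) (b := 1))
    fun t ht => div_pos (H.bump.pos t ht) (hΓ.weight_pos t)
  have hle : ∀ t, θ t ≤ M₁ * G t + M₂ * (b t / W t) := by
    intro t
    by_cases h1 : |t| ≤ 1
    · have := hM₂' t (_root_.abs_le.1 h1)
      linarith
    · have h1 := (not_le.1 h1).le
      have h2 := mul_nonneg hM₂ (hbWnn t)
      by_cases h3 : |t| ≤ R
      · have := hM₁' t ⟨h1, h3⟩
        linarith
      · have : θ t = 0 := by
          by_contra hne
          exact h3 (hR t (subset_tsupport θ hne))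
        rw [this]
        exact add_nonneg (mul_nonneg hM₁ (hg0 t h1)) h2
  refine ⟨M₁ + M₂, ?_⟩
  filter_upwards [hlim.eventually_le_const zero_lt_one] with n hn
  have hm := h.matter n
  have e : ∀ p, tubeLift Γ (fun t => M₁ * G t + M₂ * (b t / W t)) p =
      M₁ * tubeLift Γ G p + M₂ * tubeLift Γ (fun t => b t / W t) p := fun p => by
    simp only [tubeLift]
    ring
  have i1 := integrable_mul_of_hasCompactSupport (hm.continuous 0 0)
    (hΓ.continuous_tubeLift hGcont) (hΓ.hasCompactSupport_tubeLift hGc)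
  have i2 := integrable_mul_of_hasCompactSupport (hm.continuous 0 0)
    (hΓ.continuous_tubeLift hWc) (hΓ.hasCompactSupport_tubeLift hbW)
  calc ∫ p, T n p 0 0 * tubeLift Γ θ p
      ≤ ∫ p, T n p 0 0 * tubeLift Γ (fun t => M₁ * G t + M₂ * (b t / W t)) p :=
        h.integral_energy_mono (hΓ.continuous_tubeLift hθ) (hΓ.hasCompactSupport_tubeLift hθc)
          (hΓ.continuous_tubeLift ((continuous_const.mul hGcont).add (continuous_const.mul hWc)))
          (hΓ.hasCompactSupport_tubeLift ((hGc.mul_left (f := fun _ => M₁)).add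
            (hbW.mul_left (f := fun _ => M₂)))) (tubeLift_mono hle) n
    _ = M₁ * (∫ p, T n p 0 0 * tubeLift Γ G p) +
          M₂ * ∫ p, T n p 0 0 * tubeLift Γ (fun t => b t / W t) p := by
        rw [← integral_const_mul, ← integral_const_mul,
          ← integral_add (i1.const_mul _) (i2.const_mul _)]
        congr 1
        ext p
        rw [e]
        ring
    _ ≤ M₁ * 1 + M₂ * 1 := by
        rw [h.norm n]
        exact add_le_add (mul_le_mul_of_nonneg_left ((hmain n).trans hn) hM₁) le_rfl
    _ = M₁ + M₂ := by ring

/-- Test functions vanishing on the curve are asymptotically negligible. -/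
lemma tendsto_energy_of_vanishing (h : Concentrating Γ W b F κ T J) (H : Background Γ W b F κ)
    {f : Vec4 → ℝ} (hf : Continuous f) (hfc : HasCompactSupport f) (h0 : ∀ t, f (Γ t) = 0) :
    Tendsto (fun n => ∫ p, T n p 0 0 * |f p|) atTop (𝓝 0) := by
  have hΓ := H.curve
  obtain ⟨R, hR⟩ := hfc.isBounded.exists_norm_le
  set θ : ℝ → ℝ := fun t => Real.smoothTransition (R + 1 - |t|) with hθdef
  have hθ : Continuous θ :=
    Real.smoothTransition.continuous.comp (continuous_const.sub continuous_abs)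
  have hθc : HasCompactSupport θ := by
    refine HasCompactSupport.intro (isCompact_Icc (a := -(R + 1)) (b := R + 1)) fun t ht => ?_
    refine Real.smoothTransition.zero_of_nonpos ?_
    by_contra hc
    exact ht (_root_.abs_le.1 (by linarith))
  have hθnn : ∀ t, 0 ≤ θ t := fun t => Real.smoothTransition.nonneg _
  have hL := hΓ.continuous_tubeLift hθ
  have hLc := hΓ.hasCompactSupport_tubeLift hθc
  obtain ⟨M, hM⟩ := h.exists_energy_bound H hθ hθc
  rw [Metric.tendsto_atTop']
  intro δ hδ
  set ε := δ / (2 * (|M| + 1)) with hε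
  have hεpos : 0 < ε := by positivity
  have hrest : Continuous fun p => max (|f p| - ε * tubeLift Γ θ p) 0 :=
    (hf.abs.sub (continuous_const.mul hL)).max continuous_const
  have hrestc : HasCompactSupport fun p => max (|f p| - ε * tubeLift Γ θ p) 0 := by
    have := (hfc.comp_left (g := fun x : ℝ => |x|) abs_zero).sub
      (hLc.mul_left (f := fun _ => ε))
    exact this.comp_left (g := fun x => max x 0) (max_self 0)
  have hlim := h.away _ hrest hrestc fun t => by
    by_cases ht : Γ t ∈ tsupport f
    · have h1 : tubeLift Γ θ (Γ t) = 1 := by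
        rw [hΓ.tubeLift_self]
        refine Real.smoothTransition.one_of_one_le ?_
        have h2 : |Γ t 0| ≤ R := (norm_le_pi_norm (Γ t) 0).trans (hR _ ht)
        rw [hΓ.time] at h2
        linarith
      have h3 : ∀ᶠ p in 𝓝 (Γ t), |f p| < ε * tubeLift Γ θ p :=
        hf.abs.continuousAt.eventually_lt (continuous_const.mul hL).continuousAt
          (by simpa [h0, h1] using hεpos)
      filter_upwards [h3] with p hp
      exact max_eq_right (by linarith)
    · filter_upwards [notMem_tsupport_iff_eventuallyEq.1 ht] with p hp
      have := mul_nonneg hεpos.le (tubeLift_nonneg (Γ := Γ) hθnn p)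
      simpa [hp] using this
  obtain ⟨N, hN⟩ := eventually_atTop.1
    (hM.and (hlim.eventually_lt_const (show (0 : ℝ) < δ / 2 by positivity)))
  refine ⟨N, fun n hn => ?_⟩
  obtain ⟨hn1, hn2⟩ := hN n hn.le
  have hm := h.matter n
  have hnn : 0 ≤ ∫ p, T n p 0 0 * |f p| :=
    integral_nonneg fun p => mul_nonneg (hm.energy_nonneg p) (abs_nonneg _)
  rw [Real.dist_eq, sub_zero, abs_of_nonneg hnn]
  calc ∫ p, T n p 0 0 * |f p|
      ≤ ∫ p, (ε * (T n p 0 0 * tubeLift Γ θ p) +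
          T n p 0 0 * max (|f p| - ε * tubeLift Γ θ p) 0) := by
        refine integral_mono (integrable_mul_of_hasCompactSupport (hm.continuous 0 0) hf.abs
          (hfc.comp_left abs_zero)) (((integrable_mul_of_hasCompactSupport (hm.continuous 0 0)
            hL hLc).const_mul ε).add (integrable_mul_of_hasCompactSupport (hm.continuous 0 0)
              hrest hrestc)) fun p => ?_
        have := mul_le_mul_of_nonneg_left
          (le_max_left (|f p| - ε * tubeLift Γ θ p) 0) (hm.energy_nonneg p)
        change T n p 0 0 * |f p| ≤ ε * (T n p 0 0 * tubeLift Γ θ p) +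
          T n p 0 0 * max (|f p| - ε * tubeLift Γ θ p) 0
        linarith
    _ = ε * (∫ p, T n p 0 0 * tubeLift Γ θ p) +
          ∫ p, T n p 0 0 * max (|f p| - ε * tubeLift Γ θ p) 0 := by
        rw [integral_add ((integrable_mul_of_hasCompactSupport (hm.continuous 0 0)
            hL hLc).const_mul ε) (integrable_mul_of_hasCompactSupport (hm.continuous 0 0)
              hrest hrestc), integral_const_mul]
    _ < ε * (|M| + 1) + δ / 2 := by
        refine add_lt_add_of_le_of_lt (mul_le_mul_of_nonneg_left ?_ hεpos.le) hn2
        linarith [le_abs_self M]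
    _ = δ := by
        rw [hε]
        field_simp
        norm_num

lemma tendsto_stress_of_vanishing (h : Concentrating Γ W b F κ T J) (H : Background Γ W b F κ)
    (i j : Fin 4) {f : Vec4 → ℝ} (hf : Continuous f) (hfc : HasCompactSupport f)
    (h0 : ∀ t, f (Γ t) = 0) :
    Tendsto (fun n => ∫ p, T n p i j * f p) atTop (𝓝 0) :=
  squeeze_zero_norm (fun n => by
    have := h.abs_integral_le (B := 1) (n := n) (k := fun p => T n p i j)
      (fun p => by simpa using (h.matter n).abs_le p i j) hf hfc
    rwa [one_mul] at this) (h.tendsto_energy_of_vanishing H hf hfc h0)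

lemma tendsto_current_of_vanishing (h : Concentrating Γ W b F κ T J) (H : Background Γ W b F κ)
    (i : Fin 4) {f : Vec4 → ℝ} (hf : Continuous f) (hfc : HasCompactSupport f)
    (h0 : ∀ t, f (Γ t) = 0) :
    Tendsto (fun n => ∫ p, J n p i * f p) atTop (𝓝 0) :=
  squeeze_zero_norm (fun n => h.abs_integral_le (n := n) (k := fun p => J n p i)
      (fun p => (h.matter n).abs_current_le H.nonneg p i) hf hfc)
    (by simpa using (h.tendsto_energy_of_vanishing H hf hfc h0).const_mul (6 * κ))

lemma tendsto_stress_congr (h : Concentrating Γ W b F κ T J) (H : Background Γ W b F κ)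
    (i j : Fin 4) {f g : Vec4 → ℝ} (hf : Continuous f) (hfc : HasCompactSupport f)
    (hg : Continuous g) (hgc : HasCompactSupport g) (h0 : ∀ t, f (Γ t) = g (Γ t)) :
    Tendsto (fun n => (∫ p, T n p i j * f p) - ∫ p, T n p i j * g p) atTop (𝓝 0) := by
  refine (h.tendsto_stress_of_vanishing H i j (hf.sub hg) (hfc.sub hgc)
    fun t => by simp [h0]).congr fun n => ?_
  rw [← integral_sub (integrable_mul_of_hasCompactSupport ((h.matter n).continuous i j) hf hfc)
    (integrable_mul_of_hasCompactSupport ((h.matter n).continuous i j) hg hgc)]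
  simp [mul_sub]

lemma tendsto_current_congr (h : Concentrating Γ W b F κ T J) (H : Background Γ W b F κ)
    (i : Fin 4) {f g : Vec4 → ℝ} (hf : Continuous f) (hfc : HasCompactSupport f)
    (hg : Continuous g) (hgc : HasCompactSupport g) (h0 : ∀ t, f (Γ t) = g (Γ t)) :
    Tendsto (fun n => (∫ p, J n p i * f p) - ∫ p, J n p i * g p) atTop (𝓝 0) := by
  refine (h.tendsto_current_of_vanishing H i (hf.sub hg) (hfc.sub hgc)
    fun t => by simp [h0]).congr fun n => ?_
  rw [← integral_sub (integrable_mul_of_hasCompactSupport ((h.matter n).continuous_current i) hf hfc)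
    (integrable_mul_of_hasCompactSupport ((h.matter n).continuous_current i) hg hgc)]
  simp [mul_sub]

end Concentrating

lemma tendsto_sum_zero {x : Fin 4 → ℕ → ℝ} (h : ∀ i, Tendsto (x i) atTop (𝓝 0)) :
    Tendsto (fun n => ∑ i, x i n) atTop (𝓝 0) := by
  simpa using tendsto_finsetSum Finset.univ fun i _ => h i

namespace TimeCurve

variable {Γ : ℝ → Vec4} {W : ℝ → ℝ}

lemma contDiff_velocity_mul (h : TimeCurve Γ W) (i : Fin 4) {f : Vec4 → ℝ}
    (hf : ContDiff ℝ (⊤ : ℕ∞) f) :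
    ContDiff ℝ (⊤ : ℕ∞) fun p => deriv Γ (p 0) i * f p :=
  ((h.contDiff_deriv_coord i).comp (contDiff_apply ℝ ℝ 0)).mul hf

lemma sum_integral_mul_pd_offset (h : TimeCurve Γ W) {k : Fin 4 → Vec4 → ℝ}
    (hk : ∀ a, Continuous (k a)) (i : Fin 4) {f : Vec4 → ℝ} (hf : ContDiff ℝ (⊤ : ℕ∞) f)
    (hfc : HasCompactSupport f) :
    ∑ a, ∫ p, k a p * (f p * pd a (offset Γ i) p) =
      (∫ p, k i p * f p) - ∫ p, k 0 p * (deriv Γ (p 0) i * f p) := by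
  have hu : ∀ a, Integrable fun p => k a p * (deriv Γ (p 0) i * f p) := fun a =>
    integrable_mul_of_hasCompactSupport (hk a) (h.contDiff_velocity_mul i hf).continuous
      hfc.mul_left
  have h1 : ∀ a, ∫ p, k a p * (f p * pd a (offset Γ i) p) =
      (if a = i then ∫ p, k a p * f p else 0) -
        if a = 0 then ∫ p, k a p * (deriv Γ (p 0) i * f p) else 0 := fun a => by
    have e : ∀ p, k a p * (f p * pd a (offset Γ i) p) = (if a = i then 1 else 0) * (k a p * f p) -
        (if a = 0 then 1 else 0) * (k a p * (deriv Γ (p 0) i * f p)) := fun p => by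
      rw [h.pd_offset]
      split_ifs <;> ring
    simp only [e]
    rw [integral_sub ((integrable_mul_of_hasCompactSupport (hk a) hf.continuous hfc).const_mul _)
      ((hu a).const_mul _), integral_const_mul, integral_const_mul]
    simp
  simp [h1]

end TimeCurve

namespace Concentrating

variable {Γ : ℝ → Vec4} {W b : ℝ → ℝ} {F : Vec4 → Mat4} {κ : ℝ} {T : ℕ → Vec4 → Mat4}
  {J : ℕ → Vec4 → Vec4}

lemma pd_mul_offset_self (H : Background Γ W b F κ) {f : Vec4 → ℝ}
    (hf : ContDiff ℝ (⊤ : ℕ∞) f) (i a : Fin 4) (t : ℝ) :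
    pd a (fun q => f q * offset Γ i q) (Γ t) = f (Γ t) * pd a (offset Γ i) (Γ t) := by
  rw [pd_mul hf (H.curve.contDiff_offset i), H.curve.offset_self, mul_zero, zero_add]

/-- Asymptotically, the current is parallel to the curve. -/
lemma tendsto_current_parallel (h : Concentrating Γ W b F κ T J) (H : Background Γ W b F κ)
    (i : Fin 4) {f : Vec4 → ℝ} (hf : ContDiff ℝ (⊤ : ℕ∞) f) (hfc : HasCompactSupport f) :
    Tendsto (fun n => (∫ p, J n p i * f p) - ∫ p, J n p 0 * (deriv Γ (p 0) i * f p))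
      atTop (𝓝 0) := by
  have ho := H.curve.contDiff_offset i
  have hfo := hf.mul ho
  have hfoc : HasCompactSupport fun q => f q * offset Γ i q := hfc.mul_right
  have h1 := (tendsto_sum_zero fun a => h.tendsto_current_congr H a
    (g := fun p => f p * pd a (offset Γ i) p) (continuous_pd hfo a)
    (hasCompactSupport_pd hfoc a) (hf.continuous.mul (continuous_pd ho a))
    hfc.mul_right (pd_mul_offset_self H hf i a)).neg
  rw [neg_zero] at h1
  refine h1.congr fun n => ?_
  rw [← H.curve.sum_integral_mul_pd_offset (fun a => (h.matter n).continuous_current a) i hf hfc,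
    Finset.sum_sub_distrib, (h.matter n).sum_integral_current_mul_pd hfo hfoc, zero_sub, neg_neg]

lemma contDiff_force (H : Background Γ W b F κ) (i j : Fin 4) :
    ContDiff ℝ (⊤ : ℕ∞) fun p => (E * F p) i j := by
  simp only [Matrix.mul_apply]
  exact ContDiff.sum fun k _ => contDiff_const.mul (H.field k j)

lemma tendsto_stress_parallel_right (h : Concentrating Γ W b F κ T J)
    (H : Background Γ W b F κ) (i j : Fin 4) {f : Vec4 → ℝ} (hf : ContDiff ℝ (⊤ : ℕ∞) f)
    (hfc : HasCompactSupport f) :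
    Tendsto (fun n => (∫ p, T n p i j * f p) - ∫ p, T n p i 0 * (deriv Γ (p 0) j * f p))
      atTop (𝓝 0) := by
  have ho := H.curve.contDiff_offset j
  have hfo := hf.mul ho
  have hfoc : HasCompactSupport fun q => f q * offset Γ j q := hfc.mul_right
  have h1 := (tendsto_sum_zero fun a => h.tendsto_stress_congr H i a
    (g := fun p => f p * pd a (offset Γ j) p) (continuous_pd hfo a)
    (hasCompactSupport_pd hfoc a) (hf.continuous.mul (continuous_pd ho a))
    hfc.mul_right (pd_mul_offset_self H hf j a)).neg
  have h2 := tendsto_sum_zero fun a => h.tendsto_current_of_vanishing H a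
    (f := fun p => (E * F p) i a * (f p * offset Γ j p))
    ((contDiff_force H i a).continuous.mul hfo.continuous) hfoc.mul_left
    fun t => by simp [H.curve.offset_self]
  have h3 := h1.sub h2
  rw [neg_zero, sub_zero] at h3
  refine h3.congr fun n => ?_
  rw [← H.curve.sum_integral_mul_pd_offset (fun a => (h.matter n).continuous i a) j hf hfc,
    Finset.sum_sub_distrib, (h.matter n).sum_integral_mul_pd
      (fun a c => (H.field a c).continuous) i hfo hfoc]
  ring

/-- Asymptotically, the stress-energy is that of dust moving along the curve. -/
lemma tendsto_stress_parallel (h : Concentrating Γ W b F κ T J)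
    (H : Background Γ W b F κ) (i j : Fin 4) {f : Vec4 → ℝ} (hf : ContDiff ℝ (⊤ : ℕ∞) f)
    (hfc : HasCompactSupport f) :
    Tendsto (fun n => (∫ p, T n p i j * f p) -
      ∫ p, T n p 0 0 * (deriv Γ (p 0) i * (deriv Γ (p 0) j * f p))) atTop (𝓝 0) := by
  have h1 := (h.tendsto_stress_parallel_right H i j hf hfc).add
    (h.tendsto_stress_parallel_right H 0 i (H.curve.contDiff_velocity_mul j hf) hfc.mul_left)
  rw [add_zero] at h1
  refine h1.congr fun n => ?_
  have hs : ∀ p, T n p 0 i = T n p i 0 := fun p =>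
    congrFun (congrFun ((h.matter n).symm p).symm 0) i
  simp only [hs]
  ring

lemma pd_tubeLift_self (H : Background Γ W b F κ) {φ : ℝ → ℝ} (hφ : ContDiff ℝ (⊤ : ℕ∞) φ)
    (a : Fin 4) (t : ℝ) :
    pd a (tubeLift Γ φ) (Γ t) = (if a = 0 then tubeLift Γ (deriv φ) else 0) (Γ t) :=
  (H.curve.pd_tubeLift_eventuallyEq (hφ.differentiable (by simp)) a t).eq_of_nhds

lemma continuous_ite_tubeLift (H : Background Γ W b F κ) {φ : ℝ → ℝ} (hφ : Continuous φ)
    (a : Fin 4) : Continuous (if a = 0 then tubeLift Γ φ else 0) := by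
  split_ifs
  exacts [H.curve.continuous_tubeLift hφ, continuous_const]

lemma hasCompactSupport_ite_tubeLift (H : Background Γ W b F κ) {φ : ℝ → ℝ}
    (hφ : HasCompactSupport φ) (a : Fin 4) :
    HasCompactSupport (if a = 0 then tubeLift Γ φ else 0) := by
  split_ifs
  exacts [H.curve.hasCompactSupport_tubeLift hφ, HasCompactSupport.zero]

/-- Asymptotic conservation of charge. -/
lemma tendsto_charge_deriv (h : Concentrating Γ W b F κ T J) (H : Background Γ W b F κ)
    {φ : ℝ → ℝ} (hφ : ContDiff ℝ (⊤ : ℕ∞) φ) (hc : HasCompactSupport φ) :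
    Tendsto (fun n => ∫ p, J n p 0 * tubeLift Γ (deriv φ) p) atTop (𝓝 0) := by
  have hd : ContDiff ℝ (⊤ : ℕ∞) (deriv φ) := (contDiff_infty_iff_deriv.1 hφ).2
  have hf := H.curve.contDiff_tubeLift hφ
  have hfc := H.curve.hasCompactSupport_tubeLift hc
  have h1 := (tendsto_sum_zero fun a => h.tendsto_current_congr H a (continuous_pd hf a)
    (hasCompactSupport_pd hfc a) (continuous_ite_tubeLift H hd.continuous a)
    (hasCompactSupport_ite_tubeLift H hc.deriv a) (pd_tubeLift_self H hφ a)).neg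
  rw [neg_zero] at h1
  refine h1.congr fun n => ?_
  rw [Finset.sum_sub_distrib, (h.matter n).sum_integral_current_mul_pd hf hfc, zero_sub, neg_neg,
    Finset.sum_eq_single 0 (fun j _ hj => by simp [hj]) (by simp)]
  simp

lemma E_apply_self_sq (a : Fin 4) : E a a * E a a = 1 := by
  fin_cases a <;> simp [E]

lemma mink_eq_sum (x y : Vec4) : mink x y = ∑ a, E a a * (x a * y a) := by
  simp [mink, E, Fin.sum_univ_four]
  ring

lemma sum_velocity_mul_deriv (H : Background Γ W b F κ) {φ : ℝ → ℝ}
    (hφ : ContDiff ℝ (⊤ : ℕ∞) φ) (t : ℝ) :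
    ∑ a, deriv Γ t a * deriv (fun t => E a a * (W t * deriv Γ t a) * φ t) t =
      deriv φ t / W t := by
  have hW := H.curve.weight_pos t
  set q : Fin 4 → ℝ → ℝ := fun a t => W t * deriv Γ t a with hq
  have hqd : ∀ a, HasDerivAt (q a) (deriv (q a) t) t := fun a =>
    ((H.curve.smooth_weight.mul (H.curve.contDiff_deriv_coord a)).differentiable (by simp)
      t).hasDerivAt
  have hφd : HasDerivAt φ (deriv φ t) t := (hφ.differentiable (by simp) t).hasDerivAt
  have hone : ∀ t, ∑ a, E a a * (q a t * q a t) = 1 := fun t => by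
    rw [← H.curve.mink_deriv t, mink_eq_sum, Finset.mul_sum]
    exact Finset.sum_congr rfl fun a _ => by simp only [hq]; ring
  have hzero : ∑ a, E a a * (q a t * deriv (q a) t) = 0 := by
    have h1 : HasDerivAt (fun t => ∑ a, E a a * (q a t * q a t))
        (∑ a, E a a * (deriv (q a) t * q a t + q a t * deriv (q a) t)) t :=
      HasDerivAt.fun_sum fun a _ => ((hqd a).mul (hqd a)).const_mul _
    simp only [hone] at h1
    have h2 := h1.unique (hasDerivAt_const t 1)
    have h3 : ∑ a, E a a * (deriv (q a) t * q a t + q a t * deriv (q a) t) =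
        2 * ∑ a, E a a * (q a t * deriv (q a) t) := by
      rw [Finset.mul_sum]
      exact Finset.sum_congr rfl fun a _ => by ring
    linarith
  have hprod : ∀ a, deriv (fun t => E a a * q a t * φ t) t =
      E a a * deriv (q a) t * φ t + E a a * q a t * deriv φ t := fun a =>
    (((hqd a).const_mul (E a a)).mul hφd).deriv
  have hu : ∀ a, deriv Γ t a = q a t / W t := fun a => by
    simp only [hq]
    field_simp
  calc ∑ a, deriv Γ t a * deriv (fun t => E a a * q a t * φ t) t
      = φ t / W t * (∑ a, E a a * (q a t * deriv (q a) t)) +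
          deriv φ t / W t * ∑ a, E a a * (q a t * q a t) := by
        rw [Finset.mul_sum, Finset.mul_sum, ← Finset.sum_add_distrib]
        refine Finset.sum_congr rfl fun a _ => ?_
        rw [hprod, hu]
        ring
    _ = deriv φ t / W t := by rw [hzero, hone]; ring

lemma sum_force_velocity (H : Background Γ W b F κ) (p : Vec4) (t : ℝ) (s : ℝ) :
    ∑ i, ∑ j, deriv Γ t j * ((E * F p) i j * (E i i * (W t * deriv Γ t i) * s)) = 0 := by
  have hF : ∀ i j, F p i j = -F p j i := fun i j =>
    congrFun (congrFun (H.antisymm p) j) i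
  have hE : ∀ i j, (E * F p) i j = E i i * F p i j := fun i j => by
    rw [E, Matrix.diagonal_mul, Matrix.diagonal_apply_eq]
  have h1 : ∀ i j, deriv Γ t j * ((E * F p) i j * (E i i * (W t * deriv Γ t i) * s)) =
      W t * s * (deriv Γ t i * F p i j * deriv Γ t j) := fun i j => by
    rw [hE]
    linear_combination (deriv Γ t j * F p i j * W t * deriv Γ t i * s) * E_apply_self_sq i
  have h2 : ∑ i, ∑ j, deriv Γ t i * F p i j * deriv Γ t j =
      -∑ i, ∑ j, deriv Γ t i * F p i j * deriv Γ t j := by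
    conv_lhs => rw [Finset.sum_comm]
    simp only [← Finset.sum_neg_distrib]
    exact Finset.sum_congr rfl fun i _ => Finset.sum_congr rfl fun j _ => by rw [hF j i]; ring
  simp only [h1, ← Finset.mul_sum]
  rw [show ∑ i, ∑ j, deriv Γ t i * F p i j * deriv Γ t j = 0 by linarith, mul_zero]

/-- Asymptotic conservation of mass. -/
lemma tendsto_mass_deriv (h : Concentrating Γ W b F κ T J) (H : Background Γ W b F κ)
    {φ : ℝ → ℝ} (hφ : ContDiff ℝ (⊤ : ℕ∞) φ) (hc : HasCompactSupport φ) :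
    Tendsto (fun n => ∫ p, T n p 0 0 * tubeLift Γ (fun t => deriv φ t / W t) p)
      atTop (𝓝 0) := by
  have hΓ := H.curve
  set ψ : Fin 4 → ℝ → ℝ := fun a t => E a a * (W t * deriv Γ t a) * φ t with hψdef
  have hψ : ∀ a, ContDiff ℝ (⊤ : ℕ∞) (ψ a) := fun a =>
    (contDiff_const.mul (hΓ.smooth_weight.mul (hΓ.contDiff_deriv_coord a))).mul hφ
  have hψc : ∀ a, HasCompactSupport (ψ a) := fun a => hc.mul_left
  have hd : ∀ a, ContDiff ℝ (⊤ : ℕ∞) (deriv (ψ a)) := fun a =>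
    (contDiff_infty_iff_deriv.1 (hψ a)).2
  have hf := fun a => hΓ.contDiff_tubeLift (hψ a)
  have hfc := fun a => hΓ.hasCompactSupport_tubeLift (hψc a)
  have hf' := fun a => hΓ.contDiff_tubeLift (hd a)
  have hfc' := fun a => hΓ.hasCompactSupport_tubeLift (hψc a).deriv
  have hdW : Continuous fun t => deriv φ t / W t :=
    (contDiff_infty_iff_deriv.1 hφ).2.continuous.div hΓ.smooth_weight.continuous
      fun t => (hΓ.weight_pos t).ne'
  have hdWc : HasCompactSupport fun t => deriv φ t / W t :=
    hc.deriv.mono fun t ht h0 => ht (by simp [h0])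
  have hgc : ∀ a j, ContDiff ℝ (⊤ : ℕ∞) fun p => (E * F p) a j * tubeLift Γ (ψ a) p :=
    fun a j => (contDiff_force H a j).mul (hf a)
  have hgcc : ∀ a j, HasCompactSupport fun p => (E * F p) a j * tubeLift Γ (ψ a) p :=
    fun a j => (hfc a).mul_left
  have hlorentz : Tendsto (fun n => ∑ a, ∑ j, ∫ p, J n p j * ((E * F p) a j * tubeLift Γ (ψ a) p))
      atTop (𝓝 0) := by
    have h1 := tendsto_sum_zero fun a => tendsto_sum_zero fun j =>
      h.tendsto_current_parallel H j (hgc a j) (hgcc a j)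
    have hi : ∀ a j, ContDiff ℝ (⊤ : ℕ∞)
        fun p => deriv Γ (p 0) j * ((E * F p) a j * tubeLift Γ (ψ a) p) := fun a j =>
      hΓ.contDiff_velocity_mul j (hgc a j)
    have hic : ∀ a j, HasCompactSupport
        fun p => deriv Γ (p 0) j * ((E * F p) a j * tubeLift Γ (ψ a) p) := fun a j =>
      (hgcc a j).mul_left
    have h2 := h.tendsto_current_of_vanishing H 0
      (f := fun p => ∑ a, ∑ j, deriv Γ (p 0) j * ((E * F p) a j * tubeLift Γ (ψ a) p))
      (continuous_finsetSum _ fun a _ => continuous_finsetSum _ fun j _ => (hi a j).continuous)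
      (HasCompactSupport.intro (hΓ.isCompact_tube hc) fun p hp => by
        simp [fun a => TimeCurve.tubeLift_eq_zero (Γ := Γ) (φ := ψ a) (K := tsupport φ)
          ((Function.support_mul_subset_right _ _).trans (subset_tsupport φ)) hp])
      (fun t => by
        simp only [hΓ.tubeLift_self, hΓ.time]
        exact sum_force_velocity H _ t _)
    have h3 := h1.add h2
    rw [add_zero] at h3
    refine h3.congr fun n => ?_
    have hint : ∀ a j, Integrable fun p =>
        J n p 0 * (deriv Γ (p 0) j * ((E * F p) a j * tubeLift Γ (ψ a) p)) := fun a j =>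
      integrable_mul_of_hasCompactSupport ((h.matter n).continuous_current 0)
        (hi a j).continuous (hic a j)
    simp only [Finset.mul_sum, Finset.sum_sub_distrib]
    rw [integral_finsetSum _ fun a _ => integrable_finsetSum _ fun j _ => hint a j]
    simp only [fun a => integral_finsetSum Finset.univ fun j _ => hint a j]
    ring
  have hstep : Tendsto (fun n => ∑ a, ∫ p, T n p a 0 * tubeLift Γ (deriv (ψ a)) p)
      atTop (𝓝 0) := by
    have h1 := tendsto_sum_zero fun a => tendsto_sum_zero fun j =>
      h.tendsto_stress_congr H a j (continuous_pd (hf a) j) (hasCompactSupport_pd (hfc a) j)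
        (continuous_ite_tubeLift H (hd a).continuous j)
        (hasCompactSupport_ite_tubeLift H (hψc a).deriv j) (pd_tubeLift_self H (hψ a) j)
    have h2 := (h1.add hlorentz).neg
    rw [add_zero, neg_zero] at h2
    refine h2.congr fun n => ?_
    have h3 : ∀ a, ∑ j, ∫ p, T n p a j *
        (if j = 0 then tubeLift Γ (deriv (ψ a)) else 0 : Vec4 → ℝ) p =
        ∫ p, T n p a 0 * tubeLift Γ (deriv (ψ a)) p := fun a => by
      rw [Finset.sum_eq_single 0 (fun j _ hj => by simp [hj]) (by simp)]
      simp
    simp only [Finset.sum_sub_distrib, h3, fun a => (h.matter n).sum_integral_mul_pd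
      (fun i c => (H.field i c).continuous) a (hf a) (hfc a), Finset.sum_neg_distrib]
    ring
  have h1 := tendsto_sum_zero fun a => h.tendsto_stress_parallel H a 0 (hf' a) (hfc' a)
  have hi : ∀ a, ContDiff ℝ (⊤ : ℕ∞) fun p =>
      deriv Γ (p 0) a * (deriv Γ (p 0) 0 * tubeLift Γ (deriv (ψ a)) p) := fun a =>
    hΓ.contDiff_velocity_mul a (hΓ.contDiff_velocity_mul 0 (hf' a))
  have hic : ∀ a, HasCompactSupport fun p =>
      deriv Γ (p 0) a * (deriv Γ (p 0) 0 * tubeLift Γ (deriv (ψ a)) p) := fun a =>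
    (hfc' a).mul_left.mul_left
  have h2 := h.tendsto_stress_congr H 0 0
    (f := fun p => ∑ a, deriv Γ (p 0) a * (deriv Γ (p 0) 0 * tubeLift Γ (deriv (ψ a)) p))
    (continuous_finsetSum _ fun a _ => (hi a).continuous)
    (HasCompactSupport.intro (hΓ.isCompact_tube hc) fun p hp => by
        simp [fun a => TimeCurve.tubeLift_eq_zero (Γ := Γ) (φ := deriv (ψ a)) (K := tsupport φ)
          ((support_deriv_subset).trans (closure_mono (Function.support_mul_subset_right _ _))) hp])
    (hΓ.continuous_tubeLift hdW) (hΓ.hasCompactSupport_tubeLift hdWc)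
    (fun t => by
      simp only [hΓ.tubeLift_self, hΓ.time, hΓ.deriv_zero, one_mul]
      exact sum_velocity_mul_deriv H hφ t)
  have h3 := (hstep.sub h1).sub h2
  rw [sub_zero, sub_zero] at h3
  refine h3.congr fun n => ?_
  simp only [Finset.mul_sum, Finset.sum_sub_distrib]
  rw [integral_finsetSum _ fun a _ => integrable_mul_of_hasCompactSupport
    ((h.matter n).continuous 0 0) (hi a).continuous (hic a)]
  ring

lemma _root_.TimeCurve.hasCompactSupport_comp (h : TimeCurve Γ W) {f : Vec4 → ℝ}
    (hf : HasCompactSupport f) : HasCompactSupport fun t => f (Γ t) :=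
  HasCompactSupport.intro (hf.image (continuous_apply (0 : Fin 4))) fun t ht => by
    by_contra hne
    exact ht ⟨Γ t, subset_tsupport f hne, h.time t⟩

lemma _root_.TimeCurve.contDiff_div_weight (h : TimeCurve Γ W) {φ : ℝ → ℝ}
    (hφ : ContDiff ℝ (⊤ : ℕ∞) φ) : ContDiff ℝ (⊤ : ℕ∞) fun t => φ t / W t :=
  hφ.div h.smooth_weight fun t => (h.weight_pos t).ne'

lemma exists_primitive_sub_bump (H : Background Γ W b F κ) {φ : ℝ → ℝ}
    (hφ : ContDiff ℝ (⊤ : ℕ∞) φ) (hc : HasCompactSupport φ) :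
    ∃ Φ : ℝ → ℝ, ContDiff ℝ (⊤ : ℕ∞) Φ ∧ HasCompactSupport Φ ∧
      ∀ t, deriv Φ t = φ t - (∫ s, φ s) * b t := by
  have hb := H.bump
  obtain ⟨Φ, h1, h2, h3⟩ := exists_primitive (φ := fun t => φ t - (∫ s, φ s) * b t)
    (hφ.sub (contDiff_const.mul hb.smooth)) (hc.sub (hb.compact.mul_left (f := fun _ => ∫ s, φ s)))
    (by
      rw [integral_sub (hφ.continuous.integrable_of_hasCompactSupport hc)
        ((hb.smooth.continuous.integrable_of_hasCompactSupport hb.compact).const_mul _),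
        integral_const_mul, hb.integral, mul_one, sub_self])
  exact ⟨Φ, h1, h2, fun t => congrFun h3 t⟩

/-- The energy density converges to the delta distribution of the curve. -/
lemma tendsto_energy (h : Concentrating Γ W b F κ T J) (H : Background Γ W b F κ)
    {f : Vec4 → ℝ} (hf : ContDiff ℝ (⊤ : ℕ∞) f) (hfc : HasCompactSupport f) :
    Tendsto (fun n => ∫ p, T n p 0 0 * f p) atTop (𝓝 (∫ t, W t * f (Γ t))) := by
  have hΓ := H.curve
  obtain ⟨Φ, hΦ, hΦc, hΦd⟩ := exists_primitive_sub_bump H (φ := fun t => W t * f (Γ t))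
    (hΓ.smooth_weight.mul (hf.comp hΓ.smooth)) (hΓ.hasCompactSupport_comp hfc).mul_left
  set c := ∫ t, W t * f (Γ t) with hcdef
  have hd : ContDiff ℝ (⊤ : ℕ∞) (deriv Φ) := (contDiff_infty_iff_deriv.1 hΦ).2
  have g1 := (hΓ.contDiff_tubeLift (hΓ.contDiff_div_weight hd)).continuous
  have g1c := hΓ.hasCompactSupport_tubeLift (φ := fun t => deriv Φ t / W t)
    (hΦc.deriv.mono fun t ht h0 => ht (by simp [h0]))
  have g2 := (hΓ.contDiff_tubeLift (hΓ.contDiff_div_weight H.bump.smooth)).continuous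
  have g2c := hΓ.hasCompactSupport_tubeLift (φ := fun t => b t / W t)
    (H.bump.compact.mono fun t ht h0 => ht (by simp [h0]))
  have h1 := h.tendsto_stress_congr H 0 0 (f := f)
    (g := fun p => tubeLift Γ (fun t => deriv Φ t / W t) p + c * tubeLift Γ (fun t => b t / W t) p)
    hf.continuous hfc (g1.add (continuous_const.mul g2)) (g1c.add (g2c.mul_left (f := fun _ => c)))
    fun t => by
      simp only [hΓ.tubeLift_self, hΦd]
      have := (hΓ.weight_pos t).ne'
      field_simp
      ring
  have h2 := (h1.add (h.tendsto_mass_deriv H hΦ hΦc)).add_const c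
  rw [add_zero, zero_add] at h2
  refine h2.congr fun n => ?_
  have hT := (h.matter n).continuous 0 0
  have e : ∀ p, T n p 0 0 * (tubeLift Γ (fun t => deriv Φ t / W t) p +
      c * tubeLift Γ (fun t => b t / W t) p) = T n p 0 0 * tubeLift Γ (fun t => deriv Φ t / W t) p +
      c * (T n p 0 0 * tubeLift Γ (fun t => b t / W t) p) := fun p => by ring
  simp only [e]
  rw [integral_add (integrable_mul_of_hasCompactSupport hT g1 g1c)
    ((integrable_mul_of_hasCompactSupport hT g2 g2c).const_mul c), integral_const_mul, h.norm n]
  ring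

/-- The charge density is asymptotically a multiple of the delta distribution of the curve. -/
lemma tendsto_charge (h : Concentrating Γ W b F κ T J) (H : Background Γ W b F κ)
    {f : Vec4 → ℝ} (hf : ContDiff ℝ (⊤ : ℕ∞) f) (hfc : HasCompactSupport f) :
    Tendsto (fun n => (∫ p, J n p 0 * f p) -
      (∫ t, f (Γ t)) * ∫ p, J n p 0 * tubeLift Γ b p) atTop (𝓝 0) := by
  have hΓ := H.curve
  obtain ⟨Φ, hΦ, hΦc, hΦd⟩ := exists_primitive_sub_bump H (φ := fun t => f (Γ t))
    (hf.comp hΓ.smooth) (hΓ.hasCompactSupport_comp hfc)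
  set c := ∫ t, f (Γ t) with hcdef
  have hd : ContDiff ℝ (⊤ : ℕ∞) (deriv Φ) := (contDiff_infty_iff_deriv.1 hΦ).2
  have g1 := hΓ.continuous_tubeLift hd.continuous
  have g1c := hΓ.hasCompactSupport_tubeLift hΦc.deriv
  have g2 := hΓ.continuous_tubeLift H.bump.smooth.continuous
  have g2c := hΓ.hasCompactSupport_tubeLift H.bump.compact
  have h1 := h.tendsto_current_congr H 0 (f := f)
    (g := fun p => tubeLift Γ (deriv Φ) p + c * tubeLift Γ b p)
    hf.continuous hfc (g1.add (continuous_const.mul g2)) (g1c.add (g2c.mul_left (f := fun _ => c)))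
    fun t => by simp [hΓ.tubeLift_self, hΦd]
  have h2 := h1.add (h.tendsto_charge_deriv H hΦ hΦc)
  rw [add_zero] at h2
  refine h2.congr fun n => ?_
  have hT := (h.matter n).continuous_current 0
  have e : ∀ p, J n p 0 * (tubeLift Γ (deriv Φ) p + c * tubeLift Γ b p) =
      J n p 0 * tubeLift Γ (deriv Φ) p + c * (J n p 0 * tubeLift Γ b p) := fun p => by ring
  simp only [e]
  rw [integral_add (integrable_mul_of_hasCompactSupport hT g1 g1c)
    ((integrable_mul_of_hasCompactSupport hT g2 g2c).const_mul c), integral_const_mul]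
  ring

lemma _root_.TimeCurve.integrable_comp (h : TimeCurve Γ W) {f : Vec4 → ℝ} (hf : Continuous f)
    (hfc : HasCompactSupport f) : Integrable fun t => f (Γ t) :=
  (hf.comp h.smooth.continuous).integrable_of_hasCompactSupport (h.hasCompactSupport_comp hfc)

lemma tendsto_stress (h : Concentrating Γ W b F κ T J) (H : Background Γ W b F κ)
    {x : Vec4 → Mat4} (hx : SmoothMatField x) (hxc : HasCompactSupport x) :
    Tendsto (fun n => ∫ p, minner (T n p) (x p)) atTop
      (𝓝 (∫ t, W t * ∑ i, ∑ j, deriv Γ t i * deriv Γ t j * x (Γ t) i j)) := by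
  have hΓ := H.curve
  have hc : ∀ i j, HasCompactSupport fun p => x p i j := fun i j =>
    hxc.comp_left (g := fun A : Mat4 => A i j) rfl
  have hs : ∀ i j, ContDiff ℝ (⊤ : ℕ∞) fun p => deriv Γ (p 0) i * (deriv Γ (p 0) j * x p i j) :=
    fun i j => hΓ.contDiff_velocity_mul i (hΓ.contDiff_velocity_mul j (hx i j))
  have hsc : ∀ i j, HasCompactSupport fun p => deriv Γ (p 0) i * (deriv Γ (p 0) j * x p i j) :=
    fun i j => (hc i j).mul_left.mul_left
  have h1 : ∀ i j, Tendsto (fun n => ∫ p, T n p i j * x p i j) atTop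
      (𝓝 (∫ t, W t * (deriv Γ t i * (deriv Γ t j * x (Γ t) i j)))) := fun i j => by
    have := (h.tendsto_stress_parallel H i j (hx i j) (hc i j)).add
      (h.tendsto_energy H (hs i j) (hsc i j))
    simpa only [zero_add, sub_add_cancel, hΓ.time] using this
  have hint : ∀ i j, Integrable fun t => W t * (deriv Γ t i * (deriv Γ t j * x (Γ t) i j)) :=
    fun i j => by
      have h2 : Continuous fun p : Vec4 =>
          W (p 0) * (deriv Γ (p 0) i * (deriv Γ (p 0) j * x p i j)) :=
        (hΓ.smooth_weight.continuous.comp (continuous_apply 0)).mul (hs i j).continuous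
      simpa only [hΓ.time] using hΓ.integrable_comp h2 (hsc i j).mul_left
  have h2 := tendsto_finsetSum Finset.univ fun i _ => tendsto_finsetSum Finset.univ fun j _ => h1 i j
  have e : ∀ t, W t * ∑ i, ∑ j, deriv Γ t i * deriv Γ t j * x (Γ t) i j =
      ∑ i, ∑ j, W t * (deriv Γ t i * (deriv Γ t j * x (Γ t) i j)) := fun t => by
    simp only [Finset.mul_sum, mul_assoc]
  simp only [e]
  rw [integral_finsetSum _ fun i _ => integrable_finsetSum _ fun j _ => hint i j]
  simp only [fun i => integral_finsetSum Finset.univ fun j _ => hint i j]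
  refine h2.congr fun n => ?_
  have hi : ∀ i j, Integrable fun p => T n p i j * x p i j := fun i j =>
    integrable_mul_of_hasCompactSupport ((h.matter n).continuous i j) (hx i j).continuous (hc i j)
  simp only [minner]
  rw [integral_finsetSum _ fun i _ => integrable_finsetSum _ fun j _ => hi i j]
  simp only [fun i => integral_finsetSum Finset.univ fun j _ => hi i j]

lemma tendsto_current (h : Concentrating Γ W b F κ T J) (H : Background Γ W b F κ)
    {α : Vec4 → Vec4} (hα : ∀ a : Fin 4, ContDiff ℝ (⊤ : ℕ∞) fun p => α p a)
    (hαc : HasCompactSupport α) :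
    Tendsto (fun n => (∫ p, ∑ a, J n p a * α p a) -
      (∫ t, ∑ a, deriv Γ t a * α (Γ t) a) * ∫ p, J n p 0 * tubeLift Γ b p) atTop (𝓝 0) := by
  have hΓ := H.curve
  have hc : ∀ a, HasCompactSupport fun p => α p a := fun a =>
    hαc.comp_left (g := fun v : Vec4 => v a) rfl
  have hs : ∀ a, ContDiff ℝ (⊤ : ℕ∞) fun p => deriv Γ (p 0) a * α p a :=
    fun a => hΓ.contDiff_velocity_mul a (hα a)
  have hint : ∀ a, Integrable fun t => deriv Γ t a * α (Γ t) a := fun a => by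
    simpa only [hΓ.time] using hΓ.integrable_comp (hs a).continuous (hc a).mul_left
  have h1 := tendsto_sum_zero fun a => by
    simpa only [add_zero] using (h.tendsto_current_parallel H a (hα a) (hc a)).add
      (h.tendsto_charge H (hs a) (hc a).mul_left)
  refine h1.congr fun n => ?_
  have hi : ∀ a, Integrable fun p => J n p a * α p a := fun a =>
    integrable_mul_of_hasCompactSupport ((h.matter n).continuous_current a) (hα a).continuous (hc a)
  rw [integral_finsetSum _ fun a _ => hi a, integral_finsetSum _ fun a _ => hint a, Finset.sum_mul,
    ← Finset.sum_sub_distrib]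
  simp only [hΓ.time]
  exact Finset.sum_congr rfl fun a _ => by ring

lemma exists_charge_limit (h : Concentrating Γ W b F κ T J) (H : Background Γ W b F κ) :
    ∃ κ', ∃ σ : ℕ → ℕ, StrictMono σ ∧
      Tendsto (fun n => ∫ p, J (σ n) p 0 * tubeLift Γ b p) atTop (𝓝 κ') := by
  have hb := H.curve.contDiff_tubeLift H.bump.smooth
  have hbc := H.curve.hasCompactSupport_tubeLift H.bump.compact
  have h1 := (h.tendsto_energy H hb hbc).const_mul (6 * κ)
  obtain ⟨M, hM⟩ := isBounded_iff_forall_norm_le.1 (Metric.isBounded_range_of_tendsto _ h1)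
  obtain ⟨κ', -, σ, hσ, hlim⟩ := tendsto_subseq_of_bounded
    (Metric.isBounded_closedBall (x := (0 : ℝ)) (r := M))
    (x := fun n => ∫ p, J n p 0 * tubeLift Γ b p) fun n => by
      rw [mem_closedBall_zero_iff]
      have h2 := h.abs_integral_le (n := n)
        (fun p => (h.matter n).abs_current_le H.nonneg p 0) hb.continuous hbc
      simp only [fun p => abs_of_nonneg (tubeLift_nonneg (Γ := Γ) H.bump.nonneg p)] at h2
      exact h2.trans ((le_abs_self _).trans (hM _ ⟨n, rfl⟩))
  exact ⟨κ', σ, hσ, hlim⟩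

lemma sum_E_mul_velocity (H : Background Γ W b F κ) (t : ℝ) :
    ∑ a, deriv Γ t a * (E a a * (W t * deriv Γ t a)) = 1 / W t := by
  have hW := (H.curve.weight_pos t).ne'
  rw [eq_div_iff hW, ← H.curve.mink_deriv t, mink_eq_sum, Finset.sum_mul, Finset.mul_sum]
  exact Finset.sum_congr rfl fun a _ => by ring

lemma unitTimelike_velocity (H : Background Γ W b F κ) (t : ℝ) :
    UnitTimelike fun a => E a a * (W t * deriv Γ t a) := by
  have h1 : mink (fun a => E a a * (W t * deriv Γ t a)) (fun a => E a a * (W t * deriv Γ t a)) =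
      1 := by
    rw [← H.curve.mink_deriv t, mink_eq_sum, mink_eq_sum, Finset.mul_sum]
    exact Finset.sum_congr rfl fun a _ => by
      linear_combination E a a * (W t * deriv Γ t a) ^ 2 * E_apply_self_sq a
  refine ⟨⟨h1 ▸ one_pos, ?_⟩, h1⟩
  simp [E, H.curve.deriv_zero, H.curve.weight_pos]

lemma abs_charge_limit_le (h : Concentrating Γ W b F κ T J) (H : Background Γ W b F κ)
    {κ' : ℝ} {σ : ℕ → ℕ} (hσ : StrictMono σ)
    (hlim : Tendsto (fun n => ∫ p, J (σ n) p 0 * tubeLift Γ b p) atTop (𝓝 κ')) : |κ'| ≤ κ := by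
  have hΓ := H.curve
  set w : Fin 4 → ℝ → ℝ := fun a t => E a a * (W t * deriv Γ t a) with hwdef
  have hw : ∀ a, ContDiff ℝ (⊤ : ℕ∞) fun p : Vec4 => w a (p 0) := fun a =>
    (contDiff_const.mul (hΓ.smooth_weight.mul (hΓ.contDiff_deriv_coord a))).comp
      (contDiff_apply ℝ ℝ 0)
  have hb := hΓ.contDiff_tubeLift H.bump.smooth
  have hbc := hΓ.hasCompactSupport_tubeLift H.bump.compact
  have hbnn := fun p => tubeLift_nonneg (Γ := Γ) H.bump.nonneg p
  set α : Vec4 → Vec4 := fun p a => w a (p 0) * tubeLift Γ b p with hαdef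
  set x : Vec4 → Mat4 := fun p => Matrix.of fun i j => w i (p 0) * (w j (p 0) * tubeLift Γ b p)
    with hxdef
  have hα : ∀ a, ContDiff ℝ (⊤ : ℕ∞) fun p => α p a := fun a => (hw a).mul hb
  have hx : SmoothMatField x := fun i j => (hw i).mul ((hw j).mul hb)
  have hzero : ∀ p, p ∉ tsupport (tubeLift Γ b) → tubeLift Γ b p = 0 := fun p hp => by
    by_contra hne
    exact hp (subset_tsupport _ hne)
  have hαc : HasCompactSupport α := HasCompactSupport.intro hbc fun p hp => by
    ext a
    simp [hαdef, hzero p hp]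
  have hxc : HasCompactSupport x := HasCompactSupport.intro hbc fun p hp => by
    ext i j
    simp [hxdef, hzero p hp]
  have e1 : ∀ t, ∑ a, deriv Γ t a * α (Γ t) a = b t / W t := fun t => by
    simp only [hαdef, hΓ.time, hΓ.tubeLift_self, ← mul_assoc, ← Finset.sum_mul]
    have := sum_E_mul_velocity H t
    simp only [← mul_assoc] at this
    simp only [hwdef, ← mul_assoc, this]
    ring
  have e2 : ∀ t, W t * ∑ i, ∑ j, deriv Γ t i * deriv Γ t j * x (Γ t) i j = b t / W t := fun t => by
    have h1 : ∑ i, ∑ j, deriv Γ t i * deriv Γ t j * x (Γ t) i j =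
        (∑ i, deriv Γ t i * w i t) * (∑ j, deriv Γ t j * w j t) * b t := by
      rw [Finset.sum_mul_sum, Finset.sum_mul]
      refine Finset.sum_congr rfl fun i _ => ?_
      rw [Finset.sum_mul]
      refine Finset.sum_congr rfl fun j _ => ?_
      simp only [hxdef, Matrix.of_apply, hΓ.time, hΓ.tubeLift_self]
      ring
    have hW := (hΓ.weight_pos t).ne'
    rw [h1, sum_E_mul_velocity H t]
    field_simp
  have hI : 0 < ∫ t, b t / W t :=
    (hΓ.contDiff_div_weight H.bump.smooth).continuous.integral_pos_of_hasCompactSupport_nonneg_nonzero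
      (H.bump.compact.mono fun t ht h0 => ht (by simp [h0]))
      (fun t => div_nonneg (H.bump.nonneg t) (hΓ.weight_pos t).le) (x := 0)
      (div_pos (H.bump.pos 0 (by norm_num)) (hΓ.weight_pos 0)).ne'
  have h1 := ((h.tendsto_current H hα hαc).comp hσ.tendsto_atTop).add
    (hlim.const_mul (∫ t, ∑ a, deriv Γ t a * α (Γ t) a))
  have h2 := ((h.tendsto_stress H hx hxc).comp hσ.tendsto_atTop).const_mul κ
  simp only [e1, e2, Function.comp_def, sub_add_cancel, zero_add] at h1 h2
  have h3 := le_of_tendsto_of_tendsto' h1.abs h2 fun n => by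
    have hm := h.matter (σ n)
    rw [← integral_const_mul, ← Real.norm_eq_abs]
    refine norm_integral_le_of_norm_le (Integrable.const_mul ?_ κ) (Eventually.of_forall fun p => ?_)
    · refine integrable_finsetSum _ fun i _ => integrable_finsetSum _ fun j _ =>
        integrable_mul_of_hasCompactSupport (hm.continuous i j) (hx i j).continuous
          (hxc.comp_left (g := fun A : Mat4 => A i j) rfl)
    · have h4 := mul_le_mul_of_nonneg_right
        (hm.ratio p _ (unitTimelike_velocity H (p 0))) (hbnn p)
      calc ‖∑ a, J (σ n) p a * α p a‖ = |∑ a, J (σ n) p a * w a (p 0)| * tubeLift Γ b p := by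
            have h5 : ∑ a, J (σ n) p a * α p a =
                (∑ a, J (σ n) p a * w a (p 0)) * tubeLift Γ b p := by
              simp only [hαdef, Finset.sum_mul, mul_assoc]
            rw [h5, Real.norm_eq_abs, abs_mul, abs_of_nonneg (hbnn p)]
        _ ≤ _ := h4
        _ = κ * minner (T (σ n) p) (x p) := by
            rw [mul_assoc, minner, Finset.sum_mul]
            congr 1
            refine Finset.sum_congr rfl fun i _ => ?_
            rw [Finset.sum_mul]
            refine Finset.sum_congr rfl fun j _ => ?_
            simp only [hxdef, hwdef, Matrix.of_apply]
            ring
  rw [abs_mul, abs_of_pos hI, mul_comm] at h3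
  exact le_of_mul_le_mul_right h3 hI

end Concentrating
/-! ### The dual cone near the energy density matrix -/

lemma smul_mem_coneD {A : Mat4} {c : ℝ} (hc : 0 ≤ c) (hA : A ∈ coneD) : c • A ∈ coneD := by
  obtain ⟨n, ξ, ζ, hξ, hζ, rfl⟩ := hA
  refine ⟨n, fun k => c • ξ k, ζ, fun k => ⟨?_, mul_nonneg hc (hξ k).2⟩, hζ, ?_⟩
  · have h : mink (c • ξ k) (c • ξ k) = c ^ 2 * mink (ξ k) (ξ k) := by
      simp [mink]
      ring
    rw [h]
    exact mul_nonneg (sq_nonneg c) (hξ k).1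
  · simp only [Finset.smul_sum, smul_vecMulVec, vecMulVec_smul, ← smul_add]
    exact Finset.sum_congr rfl fun k _ => smul_comm _ _ _

lemma add_mem_coneD {A B : Mat4} (hA : A ∈ coneD) (hB : B ∈ coneD) : A + B ∈ coneD := by
  obtain ⟨n, ξ, ζ, hξ, hζ, rfl⟩ := hA
  obtain ⟨m, ξ', ζ', hξ', hζ', rfl⟩ := hB
  refine ⟨n + m, Fin.append ξ ξ', Fin.append ζ ζ', fun k => ?_, fun k => ?_, ?_⟩
  · refine Fin.addCases (fun i => ?_) (fun i => ?_) k <;> simp [hξ, hξ']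
  · refine Fin.addCases (fun i => ?_) (fun i => ?_) k <;> simp [hζ, hζ']
  · simp [Fin.sum_univ_add]

lemma sum_mem_coneD {ι : Type*} (s : Finset ι) {A : ι → Mat4} (hA : ∀ i, A i ∈ coneD) :
    ∑ i ∈ s, A i ∈ coneD :=
  Finset.sum_induction A (· ∈ coneD) (fun _ _ => add_mem_coneD)
    ⟨0, 0, 0, fun k => k.elim0, fun k => k.elim0, by simp⟩ fun i _ => hA i

lemma symm_vecMulVec_mem_coneD {ξ ζ : Vec4} (hξ : FutureCausal ξ) (hζ : FutureCausal ζ) :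
    (1 / 2 : ℝ) • (vecMulVec ξ ζ + vecMulVec ζ ξ) ∈ coneD :=
  ⟨1, fun _ => ξ, fun _ => ζ, fun _ => hξ, fun _ => hζ, by simp⟩

lemma futureCausal_single_add_single (i : Fin 4) {a : ℝ} (ha : |a| ≤ 1) :
    FutureCausal (Pi.single 0 1 + Pi.single i a) := by
  by_cases hi : i = 0
  · subst hi
    have : 0 ≤ 1 + a := by linarith [(_root_.abs_le.1 ha).1]
    refine ⟨?_, by simpa using this⟩
    simp only [mink, Pi.add_apply, Pi.single_apply]
    simp
    positivity
  · exact futureCausal_add_single i hi a ha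

lemma single_add_smul_mem_coneD (i j : Fin 4) {a : ℝ} (ha : |a| ≤ 1) :
    Matrix.single 0 0 1 + a • ((1 / 2 : ℝ) • (Matrix.single i j 1 + Matrix.single j i 1)) ∈
      coneD := by
  have h1 := smul_mem_coneD (c := 1 / 2) (by norm_num) (add_mem_coneD
    (symm_vecMulVec_mem_coneD (futureCausal_single_add_single i (a := 1) (by simp))
      (futureCausal_single_add_single j ha))
    (symm_vecMulVec_mem_coneD (futureCausal_single_add_single i (a := -1) (by simp))
      (futureCausal_single_add_single j (a := -a) (by simpa using ha))))
  convert h1 using 1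
  ext k l
  simp only [Matrix.add_apply, Matrix.smul_apply, vecMulVec_apply, Matrix.single_apply,
    Pi.add_apply, Pi.single_apply, smul_eq_mul, eq_comm (b := k), eq_comm (b := l), ite_and]
  split_ifs <;> ring

lemma mem_coneD_of_abs_sub_le {A : Mat4} (hA : Aᵀ = A) {c : ℝ} (hc : 0 < c)
    (h : ∀ i j, |A i j - (c • Matrix.single 0 0 1 : Mat4) i j| ≤ c / 16) : A ∈ coneD := by
  set B : Mat4 := A - c • Matrix.single 0 0 1 with hB
  have hBs : ∀ i j, B j i = B i j := fun i j => by
    have : Bᵀ = B := by simp [hB, hA]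
    exact congrFun (congrFun this i) j
  have h1 := sum_mem_coneD Finset.univ fun i => sum_mem_coneD Finset.univ fun j =>
    smul_mem_coneD (c := c / 16) (by positivity)
      (single_add_smul_mem_coneD i j (a := 16 * B i j / c) (by
        rw [abs_div, abs_mul, abs_of_pos hc, div_le_one hc]
        have := h i j
        rw [← Matrix.sub_apply, ← hB] at this
        norm_num
        linarith))
  convert h1 using 1
  have h2 : ∀ i j, (c / 16) • (Matrix.single 0 0 1 + (16 * B i j / c) •
      ((1 / 2 : ℝ) • (Matrix.single i j 1 + Matrix.single j i 1)) : Mat4) =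
      (c / 16) • Matrix.single 0 0 1 +
        (1 / 2 : ℝ) • (Matrix.single i j (B i j) + Matrix.single j i (B j i)) := fun i j => by
    have hc' := hc.ne'
    rw [hBs i j]
    ext k l
    simp [Matrix.single_apply]
    split_ifs <;> field_simp <;> ring
  simp only [h2, Finset.sum_add_distrib, ← Finset.smul_sum]
  rw [Finset.sum_comm (f := fun i j => Matrix.single j i (B j i)), ← Matrix.matrix_eq_sum_single B,
    hB]
  simp only [Finset.sum_const, Finset.card_univ, Fintype.card_fin]
  ext k l
  simp
  ring_nf

lemma generic_smul_single {c : ℝ} (hc : 0 < c) : Generic (c • Matrix.single 0 0 1) := by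
  refine ⟨by simp, ?_⟩
  rw [mem_interior_iff_mem_nhds]
  have h1 : ∀ i j, ∀ᶠ A : {A : Mat4 // Aᵀ = A} in
      𝓝 (⟨c • Matrix.single 0 0 1, by simp⟩ : {A : Mat4 // Aᵀ = A}),
      |A.val i j - (c • Matrix.single 0 0 1 : Mat4) i j| < c / 16 := fun i j => by
    have hcont : Continuous fun A : {A : Mat4 // Aᵀ = A} =>
        |A.val i j - (c • Matrix.single 0 0 1 : Mat4) i j| :=
      ((continuous_subtype_val.matrix_elem i j).sub continuous_const).abs
    exact hcont.continuousAt.eventually_lt continuousAt_const (by simp; positivity)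
  filter_upwards [eventually_all.2 fun i => eventually_all.2 fun j => h1 i j] with A hA
  exact mem_coneD_of_abs_sub_le A.2 hc fun i j => (hA i j).le

lemma smul_single_mem_coneD {c : ℝ} (hc : 0 ≤ c) : c • Matrix.single 0 0 1 ∈ coneD := by
  refine smul_mem_coneD hc ?_
  simpa using single_add_smul_mem_coneD 0 0 (a := 0) (by simp)

/-! ### Reparametrization by coordinate time -/

lemma FutureTimelike.one_le_zero {v : Vec4} (hv : FutureTimelike v) (h : mink v v = 1) :
    1 ≤ v 0 := by
  unfold mink at h
  nlinarith [hv.2, mul_self_nonneg (v 1), mul_self_nonneg (v 2), mul_self_nonneg (v 3)]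

lemma surjective_of_one_le_deriv {τ : ℝ → ℝ} (hτ : Differentiable ℝ τ)
    (h : ∀ t, 1 ≤ deriv τ t) : Function.Surjective τ := by
  have hm : Monotone fun t => τ t - t := monotone_of_deriv_nonneg (hτ.sub differentiable_id)
    fun t => by
      have : HasDerivAt (fun t => τ t - t) (deriv τ t - 1) t :=
        (hτ t).hasDerivAt.sub (hasDerivAt_id t)
      rw [this.deriv]
      linarith [h t]
  refine hτ.continuous.surjective ?_ ?_
  · refine tendsto_atTop_mono' _ ?_ (tendsto_atTop_add_const_right _ (τ 0) tendsto_id)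
    filter_upwards [eventually_ge_atTop 0] with t ht
    have := hm ht
    simp only [id] at this ⊢
    linarith
  · refine tendsto_atBot_mono' _ ?_ (tendsto_atBot_add_const_right _ (τ 0) tendsto_id)
    filter_upwards [eventually_le_atBot 0] with t ht
    have := hm ht
    simp only [id] at this ⊢
    linarith

/-- A unit timelike curve can be parametrized by coordinate time. -/
lemma exists_timeCurve {γ : ℝ → Vec4} (hγ : ContDiff ℝ (⊤ : ℕ∞) γ)
    (hunit : ∀ t : ℝ, mink (deriv γ t) (deriv γ t) = 1)
    (htl : ∀ t : ℝ, FutureTimelike (deriv γ t)) :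
    ∃ Γ W, TimeCurve Γ W ∧ Set.range Γ = Set.range γ ∧ (∀ t, Γ (γ t 0) = γ t) ∧
      (∀ t, deriv γ t = W (γ t 0) • deriv Γ (γ t 0)) ∧
      ∀ g : ℝ → ℝ, ∫ s, g s = ∫ t, W (γ t 0) * g (γ t 0) := by
  set τ : ℝ → ℝ := fun t => γ t 0 with hτdef
  have hτ : ContDiff ℝ (⊤ : ℕ∞) τ := contDiff_pi.1 hγ 0
  have hγd : ∀ t, HasDerivAt γ (deriv γ t) t := fun t =>
    (hγ.differentiable (by simp) t).hasDerivAt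
  have hτd : ∀ t, HasDerivAt τ (deriv γ t 0) t := fun t => hasDerivAt_pi.1 (hγd t) 0
  have hone : ∀ t, 1 ≤ deriv γ t 0 := fun t => (htl t).one_le_zero (hunit t)
  have hmono : StrictMono τ := strictMono_of_deriv_pos fun t => by
    rw [(hτd t).deriv]
    exact (htl t).2
  have hsurj : Function.Surjective τ :=
    surjective_of_one_le_deriv (hτ.differentiable (by simp)) fun t => by
      rw [(hτd t).deriv]
      exact hone t
  let e := (hmono.orderIsoOfSurjective τ hsurj).toHomeomorph
  have hes : ContDiff ℝ (⊤ : ℕ∞) e.symm :=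
    e.contDiff_symm_deriv (fun t => (htl t).2.ne') hτd hτ
  have hse : ∀ t, e.symm (τ t) = t := fun t => e.symm_apply_apply t
  have hes' : ∀ s, τ (e.symm s) = s := fun s => e.apply_symm_apply s
  have hd : ContDiff ℝ (⊤ : ℕ∞) fun t => deriv γ t 0 :=
    contDiff_pi.1 (contDiff_infty_iff_deriv.1 hγ).2 0
  have hΓ : ContDiff ℝ (⊤ : ℕ∞) (γ ∘ e.symm) := hγ.comp hes
  have hΓτ : ∀ t, (γ ∘ e.symm) (τ t) = γ t := fun t => by simp [hse]
  have hchain : ∀ t, deriv γ t = deriv γ t 0 • deriv (γ ∘ e.symm) (τ t) := fun t => by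
    have h1 := HasDerivAt.scomp t (hΓ.differentiable (by simp) (τ t)).hasDerivAt (hτd t)
    have h2 : (γ ∘ e.symm) ∘ τ = γ := funext hΓτ
    rw [h2] at h1
    exact h1.deriv
  refine ⟨γ ∘ e.symm, fun s => deriv γ (e.symm s) 0, ⟨hΓ, hes', hd.comp hes,
    fun s => (htl _).2, fun s => ?_⟩, e.symm.surjective.range_comp γ, hΓτ,
    fun t => ?_, fun g => ?_⟩
  · obtain ⟨t, rfl⟩ := hsurj s
    rw [hse, ← hunit t]
    conv_rhs => rw [hchain t]
    simp only [mink, Pi.smul_apply, smul_eq_mul]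
    ring
  · change deriv γ t = deriv γ (e.symm (τ t)) 0 • deriv (γ ∘ e.symm) (τ t)
    rw [hse]
    exact hchain t
  · have h1 := integral_image_eq_integral_abs_deriv_smul MeasurableSet.univ
      (fun t _ => (hτd t).hasDerivWithinAt) hmono.injective.injOn g
    rw [Set.image_univ, hsurj.range_eq, setIntegral_univ, setIntegral_univ] at h1
    rw [h1]
    refine integral_congr_ae (Eventually.of_forall fun t => ?_)
    change |deriv γ t 0| * g (τ t) = deriv γ (e.symm (τ t)) 0 * g (τ t)
    rw [hse, abs_of_pos (htl t).2]

/-! ### Extracting a concentrating sequence from a tracking collection -/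

lemma minner_smul_single (T : Mat4) (c : ℝ) : minner T (c • Matrix.single 0 0 1) = T 0 0 * c := by
  simp [minner, Matrix.single_apply, ite_and]

/-- Smooth cutoffs exhausting the complement of the curve. -/
lemma TimeCurve.exists_exhaustion {Γ : ℝ → Vec4} {W : ℝ → ℝ} (h : TimeCurve Γ W) :
    ∃ χ : ℕ → Vec4 → ℝ, (∀ n, ContDiff ℝ (⊤ : ℕ∞) (χ n)) ∧ (∀ n, HasCompactSupport (χ n)) ∧
      (∀ n p, 0 ≤ χ n p) ∧ (∀ n t, χ n =ᶠ[𝓝 (Γ t)] 0) ∧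
      ∀ K : Set Vec4, IsCompact K → (∀ t, Γ t ∉ K) → ∀ᶠ n in atTop, ∀ p ∈ K, χ n p = 1 := by
  let β : ℕ → ContDiffBump (0 : Vec4) := fun n => ⟨n + 1, n + 2, by positivity, by linarith⟩
  refine ⟨fun n p => Real.smoothTransition (n * sqOffset Γ p - 1) * β n p, fun n => ?_, fun n => ?_,
    fun n p => mul_nonneg (Real.smoothTransition.nonneg _) (β n).nonneg, fun n t => ?_,
    fun K hK hKΓ => ?_⟩
  · exact (Real.smoothTransition.contDiff.comp
      ((contDiff_const.mul h.contDiff_sqOffset).sub contDiff_const)).mul (β n).contDiff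
  · exact (β n).hasCompactSupport.mul_left
  · have h1 : ∀ᶠ p in 𝓝 (Γ t), n * sqOffset Γ p < 1 :=
      (continuous_const.mul h.contDiff_sqOffset.continuous).continuousAt.eventually_lt
        continuousAt_const (by simp [h.sqOffset_self])
    filter_upwards [h1] with p hp
    simp [Real.smoothTransition.zero_of_nonpos (x := n * sqOffset Γ p - 1) (by linarith)]
  · have hpos : ∀ p ∈ K, 0 < sqOffset Γ p := fun p hp => by
      refine lt_of_le_of_ne (Finset.sum_nonneg fun i _ => sq_nonneg _) fun h0 => ?_
      have h1 := (Finset.sum_eq_zero_iff_of_nonneg fun i _ => sq_nonneg (offset Γ i p)).1 h0.symm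
      refine hKΓ (p 0) ?_
      have h2 : Γ (p 0) = p := funext fun i => by
        have := pow_eq_zero_iff two_ne_zero |>.1 (h1 i (Finset.mem_univ i))
        exact (sub_eq_zero.1 this).symm
      rwa [h2]
    obtain ⟨δ, hδ, hδK⟩ := hK.exists_forall_le' h.contDiff_sqOffset.continuous.continuousOn hpos
    obtain ⟨R, hR⟩ := hK.isBounded.exists_norm_le
    filter_upwards [tendsto_natCast_atTop_atTop.eventually_ge_atTop (2 / δ),
      tendsto_natCast_atTop_atTop.eventually_ge_atTop R] with n hn1 hn2 p hp
    rw [div_le_iff₀ hδ] at hn1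
    have h1 : (n : ℝ) * δ ≤ n * sqOffset Γ p :=
      mul_le_mul_of_nonneg_left (hδK p hp) (Nat.cast_nonneg n)
    have h2 : β n p = 1 := (β n).one_of_mem_closedBall (by
      rw [mem_closedBall_zero_iff]
      have := hR p hp
      change ‖p‖ ≤ (n : ℝ) + 1
      linarith)
    rw [Real.smoothTransition.one_of_one_le (by linarith), h2, one_mul]

lemma exists_concentrating {Γ γ : ℝ → Vec4} {W b : ℝ → ℝ} {F : Vec4 → Mat4} {κ : ℝ}
    {C : Set ((Vec4 → Mat4) × (Vec4 → Vec4))} (hΓ : TimeCurve Γ W) (hb : UnitBump b)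
    (hrange : Set.range Γ = Set.range γ) (hC : ∀ TJ ∈ C, ChargedMatter F κ TJ.1 TJ.2)
    (htr : Tracks (Prod.fst '' C) γ) :
    ∃ (c : ℕ → ℝ) (TJ : ℕ → (Vec4 → Mat4) × (Vec4 → Vec4)), (∀ n, 0 < c n) ∧
      (∀ n, TJ n ∈ C) ∧ Concentrating Γ W b F κ (fun n p => c n • (TJ n).1 p)
        (fun n p => c n • (TJ n).2 p) := by
  obtain ⟨χ, hχ, hχc, hχ0, hχΓ, hχK⟩ := hΓ.exists_exhaustion
  set L := tubeLift Γ (fun t => b t / W t) with hLdef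
  have hL : ContDiff ℝ (⊤ : ℕ∞) L := hΓ.contDiff_tubeLift (hΓ.contDiff_div_weight hb.smooth)
  have hLc : HasCompactSupport L := hΓ.hasCompactSupport_tubeLift
    (hb.compact.mono fun t ht h0 => ht (by simp [h0]))
  have hL0 : ∀ p, 0 ≤ L p := tubeLift_nonneg fun t => div_nonneg (hb.nonneg t) (hΓ.weight_pos t).le
  have key : ∀ n : ℕ, ∃ TJ ∈ C, n * ∫ p, TJ.1 p 0 0 * χ n p < ∫ p, TJ.1 p 0 0 * L p := by
    intro n
    have hs : ContDiff ℝ (⊤ : ℕ∞) fun p => L p - n * χ n p := hL.sub (contDiff_const.mul (hχ n))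
    have hsc : HasCompactSupport fun p => L p - n * χ n p :=
      hLc.sub ((hχc n).mul_left (f := fun _ => (n : ℝ)))
    have hD : ∃ O : Set Vec4, IsOpen O ∧ Set.range γ ⊆ O ∧ ∀ p ∈ O,
        (L p - n * χ n p) • (Matrix.single 0 0 1 : Mat4) ∈ coneD := by
      refine ⟨{p | χ n =ᶠ[𝓝 p] 0}, isOpen_setOfPred_eventually_nhds, ?_, fun p hp => ?_⟩
      · rw [← hrange]
        rintro _ ⟨t, rfl⟩
        exact hχΓ n t
      · have : χ n p = 0 := Filter.EventuallyEq.eq_of_nhds hp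
        rw [this, mul_zero, sub_zero]
        exact smul_single_mem_coneD (hL0 p)
    have hG : ∃ t₀, Generic ((L (γ t₀) - n * χ n (γ t₀)) • (Matrix.single 0 0 1 : Mat4)) := by
      obtain ⟨t₀, ht₀⟩ : Γ 0 ∈ Set.range γ := hrange ▸ ⟨0, rfl⟩
      refine ⟨t₀, ?_⟩
      rw [ht₀, (hχΓ n 0).eq_of_nhds, hLdef, hΓ.tubeLift_self]
      simp only [Pi.zero_apply, mul_zero, sub_zero]
      exact generic_smul_single (div_pos (hb.pos 0 (by norm_num)) (hΓ.weight_pos 0))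
    obtain ⟨T, ⟨TJ, hTJ, rfl⟩, hpos⟩ := htr
      (fun p => (L p - n * χ n p) • Matrix.single 0 0 1) (fun i j => hs.mul contDiff_const)
      (HasCompactSupport.comp_left (g := fun c : ℝ => c • (Matrix.single 0 0 1 : Mat4)) hsc
        (zero_smul _ _)) (fun p => by simp) hD hG
    refine ⟨TJ, hTJ, ?_⟩
    have hT := (hC TJ hTJ).continuous 0 0
    have e : ∀ p, TJ.1 p 0 0 * (L p - n * χ n p) =
        TJ.1 p 0 0 * L p - n * (TJ.1 p 0 0 * χ n p) := fun p => by ring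
    simp only [minner_smul_single, e] at hpos
    rw [integral_sub (integrable_mul_of_hasCompactSupport hT hL.continuous hLc)
      ((integrable_mul_of_hasCompactSupport hT (hχ n).continuous (hχc n)).const_mul _),
      integral_const_mul] at hpos
    linarith
  choose TJ hTJ hlt using key
  have hm := fun n => hC (TJ n) (hTJ n)
  have hχnn : ∀ n, 0 ≤ ∫ p, (TJ n).1 p 0 0 * χ n p := fun n =>
    integral_nonneg fun p => mul_nonneg ((hm n).energy_nonneg p) (hχ0 n p)
  have hpos : ∀ n, 0 < ∫ p, (TJ n).1 p 0 0 * L p := fun n =>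
    (mul_nonneg (Nat.cast_nonneg n) (hχnn n)).trans_lt (hlt n)
  have e : ∀ (c : ℝ) (T : Vec4 → Mat4) (f : Vec4 → ℝ),
      ∫ p, (c • T p) 0 0 * f p = c * ∫ p, T p 0 0 * f p := fun c T f => by
    rw [← integral_const_mul]
    simp only [Matrix.smul_apply, smul_eq_mul, mul_assoc]
  refine ⟨fun n => (∫ p, (TJ n).1 p 0 0 * L p)⁻¹, TJ, fun n => inv_pos.2 (hpos n), hTJ,
    fun n => (hm n).smul (inv_pos.2 (hpos n)).le, fun n => ?_, fun f hf hfc hfΓ => ?_⟩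
  · rw [e]
    exact inv_mul_cancel₀ (hpos n).ne'
  · obtain ⟨M, hM⟩ := hf.bounded_above_of_compact_support hfc
    have hM0 : 0 ≤ M := (norm_nonneg _).trans (hM 0)
    refine squeeze_zero_norm' ?_ (tendsto_const_div_atTop_nhds_zero_nat M)
    filter_upwards [hχK (tsupport f) hfc fun t => notMem_tsupport_iff_eventuallyEq.2 (hfΓ t),
      eventually_gt_atTop 0] with n hn hn0
    have hn0' : (0 : ℝ) < n := Nat.cast_pos.2 hn0
    have hle : ∀ p, |f p| ≤ M * χ n p := fun p => by
      by_cases hp : p ∈ tsupport f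
      · simpa [hn p hp] using hM p
      · rw [image_eq_zero_of_notMem_tsupport hp, abs_zero]
        exact mul_nonneg hM0 (hχ0 n p)
    have h1 : |∫ p, (TJ n).1 p 0 0 * f p| ≤ M * ∫ p, (TJ n).1 p 0 0 * χ n p := by
      rw [← integral_const_mul, ← Real.norm_eq_abs]
      refine norm_integral_le_of_norm_le ((integrable_mul_of_hasCompactSupport
        ((hm n).continuous 0 0) (hχ n).continuous (hχc n)).const_mul M)
        (Eventually.of_forall fun p => ?_)
      rw [Real.norm_eq_abs, abs_mul, abs_of_nonneg ((hm n).energy_nonneg p)]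
      calc (TJ n).1 p 0 0 * |f p| ≤ (TJ n).1 p 0 0 * (M * χ n p) :=
            mul_le_mul_of_nonneg_left (hle p) ((hm n).energy_nonneg p)
        _ = M * ((TJ n).1 p 0 0 * χ n p) := by ring
    rw [e, Real.norm_eq_abs, abs_mul, abs_of_pos (inv_pos.2 (hpos n)), inv_mul_eq_div,
      div_le_div_iff₀ (hpos n) hn0']
    calc |∫ p, (TJ n).1 p 0 0 * f p| * n ≤ (M * ∫ p, (TJ n).1 p 0 0 * χ n p) * n :=
          mul_le_mul_of_nonneg_right h1 hn0'.le
      _ = M * (n * ∫ p, (TJ n).1 p 0 0 * χ n p) := by ring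
      _ ≤ M * ∫ p, (TJ n).1 p 0 0 * L p := mul_le_mul_of_nonneg_left (hlt n).le hM0

/-- Charged tracking collections converge to a charged delta distribution. -/
theorem charged_tracking_delta_convergence (F : Vec4 → Mat4)
    (hFs : ∀ a b : Fin 4, ContDiff ℝ (⊤ : ℕ∞) fun p => F p a b)
    (hFa : ∀ p, (F p)ᵀ = -(F p))
    (γ : ℝ → Vec4) (hγ : ContDiff ℝ (⊤ : ℕ∞) γ)
    (hunit : ∀ t : ℝ, mink (deriv γ t) (deriv γ t) = 1)
    (htl : ∀ t : ℝ, FutureTimelike (deriv γ t))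
    (κ : ℝ) (hκ : 0 ≤ κ)
    (C : Set ((Vec4 → Mat4) × (Vec4 → Vec4)))
    (hC : ∀ TJ ∈ C, SmoothMatField TJ.1 ∧ SymValued TJ.1 ∧ (∀ p, DEC (TJ.1 p)) ∧
      (∀ a : Fin 4, ContDiff ℝ (⊤ : ℕ∞) fun p => TJ.2 p a) ∧
      (∀ p, ∑ a, pd a (fun q => TJ.2 q a) p = 0) ∧
      (∀ p (a : Fin 4), ∑ b, pd b (fun q => TJ.1 q a b) p = ∑ b, (E * F p) a b * TJ.2 p b) ∧
      (∀ p (t : Vec4), UnitTimelike t →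
        |∑ a, TJ.2 p a * t a| ≤ κ * ∑ a, ∑ b, TJ.1 p a b * t a * t b))
    (htr : Tracks (Prod.fst '' C) γ) :
    ∃ κ' : ℝ, |κ'| ≤ κ ∧
      ∃ (c : ℕ → ℝ) (TJn : ℕ → (Vec4 → Mat4) × (Vec4 → Vec4)),
        (∀ n, 0 < c n) ∧ (∀ n, TJn n ∈ C) ∧
        (∀ x : Vec4 → Mat4, SmoothMatField x → HasCompactSupport x → SymValued x →
          Tendsto (fun n => c n * ∫ p, minner ((TJn n).1 p) (x p)) atTop
            (𝓝 (∫ t : ℝ, ∑ i, ∑ j, deriv γ t i * deriv γ t j * x (γ t) i j))) ∧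
        (∀ α : Vec4 → Vec4, (∀ a : Fin 4, ContDiff ℝ (⊤ : ℕ∞) fun p => α p a) →
          HasCompactSupport α →
          Tendsto (fun n => c n * ∫ p, ∑ a, (TJn n).2 p a * α p a) atTop
            (𝓝 (κ' * ∫ t : ℝ, ∑ a, deriv γ t a * α (γ t) a))) := by
  obtain ⟨b, hb⟩ := exists_unitBump
  obtain ⟨Γ, W, hΓ, hrange, hΓγ, hderiv, hint⟩ := exists_timeCurve hγ hunit htl
  obtain ⟨c, TJ, hc, hTJ, h⟩ := exists_concentrating (F := F) (κ := κ) hΓ hb hrange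
    (fun TJ hTJ => by
      obtain ⟨h1, h2, h3, h4, h5, h6, h7⟩ := hC TJ hTJ
      exact ⟨h1, h2, h3, h4, h5, h6, h7⟩) htr
  have H : Background Γ W b F κ := ⟨hΓ, hb, hFs, hFa, hκ⟩
  obtain ⟨κ', σ, hσ, hlim⟩ := h.exists_charge_limit H
  refine ⟨κ', h.abs_charge_limit_le H hσ hlim, c ∘ σ, TJ ∘ σ, fun n => hc _, fun n => hTJ _,
    fun x hx hxc _ => ?_, fun α hα hαc => ?_⟩
  · have h1 := (h.tendsto_stress H hx hxc).comp hσ.tendsto_atTop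
    have e1 : ∀ n, ∫ p, minner (c n • (TJ n).1 p) (x p) = c n * ∫ p, minner ((TJ n).1 p) (x p) :=
      fun n => by
        rw [← integral_const_mul]
        simp only [minner, Matrix.smul_apply, smul_eq_mul, Finset.mul_sum, mul_assoc]
    have e2 : ∫ t, W t * ∑ i, ∑ j, deriv Γ t i * deriv Γ t j * x (Γ t) i j =
        ∫ t, ∑ i, ∑ j, deriv γ t i * deriv γ t j * x (γ t) i j := by
      rw [hint]
      refine integral_congr_ae (Eventually.of_forall fun t => ?_)
      simp only [hΓγ, hderiv t, Pi.smul_apply, smul_eq_mul, Finset.mul_sum]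
      exact Finset.sum_congr rfl fun i _ => Finset.sum_congr rfl fun j _ => by ring
    simpa only [Function.comp_def, e1, e2] using h1
  · have h1 := ((h.tendsto_current H hα hαc).comp hσ.tendsto_atTop).add
      (hlim.const_mul (∫ t, ∑ a, deriv Γ t a * α (Γ t) a))
    have e1 : ∀ n, ∫ p, ∑ a, (c n • (TJ n).2 p) a * α p a =
        c n * ∫ p, ∑ a, (TJ n).2 p a * α p a := fun n => by
      rw [← integral_const_mul]
      simp only [Pi.smul_apply, smul_eq_mul, Finset.mul_sum, mul_assoc]
    have e2 : ∫ t, ∑ a, deriv Γ t a * α (Γ t) a = ∫ t, ∑ a, deriv γ t a * α (γ t) a := by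
      rw [hint]
      refine integral_congr_ae (Eventually.of_forall fun t => ?_)
      simp only [hΓγ, hderiv t, Pi.smul_apply, smul_eq_mul, Finset.mul_sum, mul_assoc]
    rw [mul_comm κ']
    simpa only [Function.comp_def, e1, e2, sub_add_cancel, zero_add] using h1
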